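/- arXiv:1108.4078 — 9 statements merged into one kernel-verified Lean document; each statement's English description precedes it below -/
import Mathlib

section
/- Let A be a nonzero m×n matrix with integer entries such that ‖A‖∞ ≥ 3. Then the solution relative magnitude of A satisfies ω(A) ≤ (‖A‖∞ − 1)^(rank A). -/
/-- The relative magnitude of a nonzero vector: `max {|x j| / |x i| : x i ≠ 0}`. -/
noncomputable def omegaVec {n : ℕ} (x : Fin n → ℝ) : ℝ :=
  sSup {r : ℝ | ∃ i j : Fin n, x i ≠ 0 ∧ r = |x j| / |x i|}

/-- The solution relative magnitude of a matrix: `inf {ω x : x ∈ N(A), x ≠ 0}`,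
with the convention that it is `0` when the null space is trivial
(in Lean, `sInf ∅ = 0` for real numbers). -/
noncomputable def omegaMat {m n : ℕ} (A : Matrix (Fin m) (Fin n) ℝ) : ℝ :=
  sInf {r : ℝ | ∃ x : Fin n → ℝ, x ≠ 0 ∧ A.mulVec x = 0 ∧ r = omegaVec x}

/-- `‖A‖∞`: the maximum row ℓ1 norm of an integer matrix, as a natural number. -/
def normInf {m n : ℕ} (A : Matrix (Fin m) (Fin n) ℤ) : ℕ :=
  Finset.univ.sup fun i => ∑ j, (A i j).natAbs

theorem aux_tu : ∀ (s : ℕ) (M : Matrix (Fin s) (Fin s) ℤ),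
    (∀ i, ∑ j, max (M i j) 0 ≤ 1 ∧ ∑ j, max (-M i j) 0 ≤ 1) → |M.det| ≤ 1 := by
  intro s
  induction s with
  | zero => intro M _; simp
  | succ s ih =>
    intro M hM
    by_cases h : ∀ i, ∑ j, M i j = 0
    · have : M.det = 0 := by
        apply Matrix.exists_mulVec_eq_zero_iff.mp
        refine ⟨fun _ => 1, ?_, ?_⟩
        · intro h0
          have := congrFun h0 0
          simp at this
        · ext i
          simp [Matrix.mulVec, dotProduct, h i]
      simp [this]
    · push Not at h
      obtain ⟨i, hi⟩ := h
      obtain ⟨h1, h2⟩ := hM i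
      have e1 : ∑ j, M i j = ∑ j, max (M i j) 0 - ∑ j, max (-M i j) 0 := by
        rw [← Finset.sum_sub_distrib]
        refine Finset.sum_congr rfl fun j _ => ?_
        omega
      have e2 : ∑ j, |M i j| = ∑ j, max (M i j) 0 + ∑ j, max (-M i j) 0 := by
        rw [← Finset.sum_add_distrib]
        refine Finset.sum_congr rfl fun j _ => ?_
        rw [abs_eq_max_neg]
        omega
      have p1 : 0 ≤ ∑ j, max (M i j) 0 := Finset.sum_nonneg fun j _ => le_max_right _ _
      have p2 : 0 ≤ ∑ j, max (-M i j) 0 := Finset.sum_nonneg fun j _ => le_max_right _ _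
      have e3 : ∑ j, |M i j| ≤ 1 := by omega
      rw [Matrix.det_succ_row M i]
      refine (Finset.abs_sum_le_sum_abs _ _).trans (le_trans ?_ e3)
      refine Finset.sum_le_sum fun j _ => ?_
      have : |(M.submatrix i.succAbove j.succAbove).det| ≤ 1 := by
        apply ih
        intro a
        obtain ⟨g1, g2⟩ := hM (i.succAbove a)
        rw [Fin.sum_univ_succAbove _ j] at g1 g2
        have q1 := le_max_right (M (i.succAbove a) j) 0
        have q2 := le_max_right (-M (i.succAbove a) j) 0
        simp only [Matrix.submatrix_apply]
        constructor <;> omega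
      rw [abs_mul, abs_mul, abs_pow, abs_neg, abs_one, one_pow, one_mul]
      exact mul_le_of_le_one_right (abs_nonneg _) this

theorem aux_det {n : ℕ} (F R : Matrix (Fin n) (Fin n) ℤ)
    (hF : ∀ i, ∑ j, max (F i j) 0 ≤ 1 ∧ ∑ j, max (-F i j) 0 ≤ 1) :
    |(F + R).det| ≤ ∏ i, (1 + ∑ j, |R i j|) := by
  classical
  let c : Fin n → Option (Fin n) → ℤ := fun i o => o.elim 1 (fun l => R i l)
  let w : Fin n → Option (Fin n) → (Fin n → ℤ) := fun i o => o.elim (F i) (fun l => Pi.single l 1)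
  have h1 : (F + R : Matrix (Fin n) (Fin n) ℤ) = fun i => ∑ o, c i o • w i o := by
    funext i j
    simp [c, w, Fintype.sum_option, Finset.sum_apply, Pi.single_apply]
  have h2 : (F + R).det = ∑ o : Fin n → Option (Fin n), (∏ i, c i (o i)) *
      Matrix.det (fun i => w i (o i)) := by
    rw [h1]
    have := (Matrix.detRowAlternating (n := Fin n) (R := ℤ)).toMultilinearMap.map_sum
      (fun i o => c i o • w i o)
    refine this.trans ?_
    refine Finset.sum_congr rfl fun o _ => ?_
    exact (Matrix.detRowAlternating (n := Fin n) (R := ℤ)).toMultilinearMap.map_smul_univ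
      (fun i => c i (o i)) (fun i => w i (o i))
  have h3 : ∏ i, (1 + ∑ j, |R i j|) = ∑ o : Fin n → Option (Fin n), ∏ i, |c i (o i)| := by
    have h4 := Finset.prod_univ_sum (fun _ : Fin n => (Finset.univ : Finset (Option (Fin n))))
      (fun i o => |c i o|)
    rw [Fintype.piFinset_univ] at h4
    rw [← h4]
    simp [c, Fintype.sum_option]
  rw [h2, h3]
  refine (Finset.abs_sum_le_sum_abs _ _).trans (Finset.sum_le_sum fun o _ => ?_)
  rw [abs_mul, Finset.abs_prod]
  refine mul_le_of_le_one_right (Finset.prod_nonneg fun _ _ => abs_nonneg _) ?_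
  apply aux_tu
  intro i
  rcases ho : o i with _ | l
  · simpa [w, ho] using hF i
  · have a1 : ∀ j, max ((Pi.single l 1 : Fin n → ℤ) j) 0 = if j = l then 1 else 0 := by
      intro j; rw [Pi.single_apply]; split_ifs <;> simp
    have a2 : ∀ j, max (-(Pi.single l 1 : Fin n → ℤ) j) 0 = 0 := by
      intro j; rw [Pi.single_apply]; split_ifs <;> simp
    simp [w, ho, a1, a2]

theorem aux_det' {n : ℕ} (M : Matrix (Fin n) (Fin n) ℤ) (y : Fin n → ℤ)
    (hy : ∀ j, |y j| = 1) (a : Fin n → ℤ)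
    (h : ∀ i, ∃ f : Fin n → ℤ, (∑ j, max (f j) 0 ≤ 1 ∧ ∑ j, max (-f j) 0 ≤ 1) ∧
      1 + ∑ j, |M i j * y j - f j| ≤ a i) :
    |M.det| ≤ ∏ i, a i := by
  choose f hf hfa using h
  have h1 := aux_det (Matrix.of f) (M * Matrix.diagonal y - Matrix.of f) (by simpa using hf)
  rw [add_sub_cancel, Matrix.det_mul, Matrix.det_diagonal, abs_mul, Finset.abs_prod] at h1
  simp only [hy, Finset.prod_const_one, mul_one] at h1
  refine h1.trans (Finset.prod_le_prod ?_ ?_)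
  · intro i _
    have : 0 ≤ ∑ j, |(M * Matrix.diagonal y - Matrix.of f) i j| :=
      Finset.sum_nonneg fun _ _ => abs_nonneg _
    omega
  · intro i _
    simpa [Matrix.mul_diagonal] using hfa i

/-- unit rows -/
theorem aux_unit {n : ℕ} (y : Fin n → ℤ) (hy : ∀ j, |y j| = 1) (c : Fin n) :
    ∃ f : Fin n → ℤ, (∑ j, max (f j) 0 ≤ 1 ∧ ∑ j, max (-f j) 0 ≤ 1) ∧
      1 + ∑ j, |(Pi.single c 1 : Fin n → ℤ) j * y j - f j| ≤ 1 := by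
  refine ⟨fun j => (Pi.single c 1 : Fin n → ℤ) j * y j, ⟨?_, ?_⟩, by simp⟩
  · have : ∀ j, max ((Pi.single c 1 : Fin n → ℤ) j * y j) 0 ≤ if j = c then 1 else 0 := by
      intro j
      have := abs_le.mp (hy j).le
      rw [Pi.single_apply]
      split_ifs <;> simp <;> omega
    exact (Finset.sum_le_sum fun j _ => this j).trans (by simp)
  · have : ∀ j, max (-((Pi.single c 1 : Fin n → ℤ) j * y j)) 0 ≤ if j = c then 1 else 0 := by
      intro j
      have := abs_le.mp (hy j).le
      rw [Pi.single_apply]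
      split_ifs <;> simp <;> omega
    exact (Finset.sum_le_sum fun j _ => this j).trans (by simp)

theorem aux_row {n : ℕ} (y : Fin n → ℤ) (hy : ∀ j, |y j| = 1) (v : Fin n → ℤ) (N : ℤ)
    (hN : ∑ j, |v j| ≤ N) (p q : Fin n) (hp : 0 < v p * y p) (hq : v q * y q < 0) :
    ∃ f : Fin n → ℤ, (∑ j, max (f j) 0 ≤ 1 ∧ ∑ j, max (-f j) 0 ≤ 1) ∧
      1 + ∑ j, |v j * y j - f j| ≤ N - 1 := by
  have hpq : p ≠ q := by rintro rfl; omega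
  refine ⟨fun j => (if j = p then 1 else 0) - (if j = q then 1 else 0), ⟨?_, ?_⟩, ?_⟩
  · have : ∀ j, max ((if j = p then (1:ℤ) else 0) - (if j = q then 1 else 0)) 0
        ≤ if j = p then 1 else 0 := by
      intro j; split_ifs <;> simp
    exact (Finset.sum_le_sum fun j _ => this j).trans (by simp)
  · have : ∀ j, max (-((if j = p then (1:ℤ) else 0) - (if j = q then 1 else 0))) 0
        ≤ if j = q then 1 else 0 := by
      intro j; split_ifs <;> simp
    exact (Finset.sum_le_sum fun j _ => this j).trans (by simp)
  · have : ∀ j, |v j * y j - ((if j = p then (1:ℤ) else 0) - (if j = q then 1 else 0))|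
        = |v j| - (if j = p then 1 else 0) - (if j = q then 1 else 0) := by
      intro j
      have e : |v j| = |v j * y j| := by rw [abs_mul, hy, mul_one]
      rw [e]
      by_cases h1 : j = p
      · subst h1
        rw [if_pos rfl, if_neg hpq, abs_of_pos hp, abs_of_nonneg (by omega)]
        omega
      · by_cases h2 : j = q
        · subst h2
          rw [if_neg h1, if_pos rfl, abs_of_neg hq, abs_of_nonpos (by omega)]
          omega
        · simp [h1, h2]
    simp only [this, Finset.sum_sub_distrib]
    simp
    omega

theorem aux_signs {n : ℕ} (v : Fin n → ℤ) (x : Fin n → ℝ) (h0 : ∑ j, (v j : ℝ) * x j = 0)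
    (j0 : Fin n) (hv : v j0 ≠ 0) (hx : x j0 ≠ 0) (y : Fin n → ℤ)
    (hy : ∀ j, y j = if 0 ≤ x j then 1 else -1) :
    (∃ p, 0 < v p * y p) ∧ ∃ q, v q * y q < 0 := by
  have key : ∀ j, (v j : ℝ) * x j = ((v j * y j : ℤ) : ℝ) * |x j| := by
    intro j
    rw [hy]
    split_ifs with h
    · simp [abs_of_nonneg h]
    · simp [abs_of_neg (not_le.mp h)]
  have hne : (v j0 : ℝ) * x j0 ≠ 0 := mul_ne_zero (by exact_mod_cast hv) hx
  constructor
  · by_contra! h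
    have : ∀ j ∈ Finset.univ, (v j : ℝ) * x j ≤ 0 := fun j _ => by
      rw [key]
      exact mul_nonpos_of_nonpos_of_nonneg (by exact_mod_cast h j) (abs_nonneg _)
    exact hne ((Finset.sum_eq_zero_iff_of_nonpos this).mp h0 j0 (Finset.mem_univ _))
  · by_contra! h
    have : ∀ j ∈ Finset.univ, 0 ≤ (v j : ℝ) * x j := fun j _ => by
      rw [key]
      exact mul_nonneg (by exact_mod_cast h j) (abs_nonneg _)
    exact hne ((Finset.sum_eq_zero_iff_of_nonneg this).mp h0 j0 (Finset.mem_univ _))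

theorem aux_cramer {n : ℕ} (M : Matrix (Fin n) (Fin n) ℝ) (x : Fin n → ℝ) (t : Fin n)
    (hM : ∀ s, s ≠ t → M s ⬝ᵥ x = 0) (i j : Fin n) :
    x i * (M.updateRow t (Pi.single j 1)).det = x j * (M.updateRow t (Pi.single i 1)).det := by
  set P := M.updateRow t (Pi.single j 1) with hP
  have h1 : P.mulVec x = Pi.single t (x j) := by
    ext s
    by_cases hs : s = t
    · subst hs
      simp [hP, Matrix.mulVec]
    · simp [hP, Matrix.mulVec, hs, hM s hs]
  have h2 : P.adjugate.mulVec (P.mulVec x) = P.det • x := by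
    rw [Matrix.mulVec_mulVec, Matrix.adjugate_mul, Matrix.smul_mulVec, Matrix.one_mulVec]
  rw [h1] at h2
  have h3 := congrFun h2 i
  rw [Matrix.mulVec_single] at h3
  simp only [Pi.smul_apply, smul_eq_mul, Matrix.col_apply, Matrix.adjugate_apply,
    MulOpposite.smul_eq_mul_unop, MulOpposite.unop_op] at h3
  rw [hP, Matrix.updateRow_idem] at h3
  rw [mul_comm, ← h3, mul_comm]

theorem aux_span {n : ℕ} (s : Set (Fin n → ℝ))
    (h : ∀ z : Fin n → ℝ, (∀ v ∈ s, v ⬝ᵥ z = 0) → z = 0) : Submodule.span ℝ s = ⊤ := by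
  by_contra hne
  obtain ⟨f, hf, hle⟩ := Submodule.exists_le_ker_of_lt_top _ (lt_top_iff_ne_top.mpr hne)
  apply hf
  have hfv : ∀ v, f v = v ⬝ᵥ (fun i => f (Pi.single i 1)) := by
    intro v
    conv_lhs => rw [pi_eq_sum_univ' v]
    simp only [map_sum, map_smul, dotProduct, smul_eq_mul]
  have := h (fun i => f (Pi.single i 1)) (fun v hv => by
    rw [← hfv]; exact hle (Submodule.subset_span hv))
  refine LinearMap.ext fun v => ?_
  rw [hfv v, this]
  simp

theorem aux_main {m n : ℕ} (A : Matrix (Fin m) (Fin n) ℤ) (N : ℕ) (hN2 : 3 ≤ N)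
    (hN : ∀ i, ∑ j, |A i j| ≤ (N : ℤ)) (x : Fin n → ℝ) (hx0 : x ≠ 0)
    (hAx : (A.map (Int.cast : ℤ → ℝ)).mulVec x = 0)
    (hmin : ∀ z : Fin n → ℝ, (A.map (Int.cast : ℤ → ℝ)).mulVec z = 0 →
      (∀ j, x j = 0 → z j = 0) → (∃ j, x j ≠ 0 ∧ z j = 0) → z = 0) (i j : Fin n) (hi : x i ≠ 0) :
    |x j| / |x i| ≤ ((N : ℝ) - 1) ^ (A.map (Int.cast : ℤ → ℝ)).rank := by
  classical
  set A' := A.map (Int.cast : ℤ → ℝ) with hA'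
  let E : Set (Fin n → ℝ) := (fun c => Pi.single c (1:ℝ)) '' {c | x c = 0}
  let G : Set (Fin n → ℝ) := E ∪ Set.range A'
  have hE : LinearIndepOn ℝ id E := by
    have h := (Pi.basisFun ℝ (Fin n)).linearIndependent
    have h2 := h.linearIndepOn_id
    refine h2.mono ?_
    rintro _ ⟨c, _, rfl⟩
    exact ⟨c, by simp⟩
  obtain ⟨b, hbG, hEb, hGb, hbi⟩ := exists_linearIndepOn_id_extension hE
    (Set.subset_union_left : E ⊆ G)
  have hkill : ∀ v ∈ b, v ⬝ᵥ x = 0 := by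
    intro v hv
    rcases hbG hv with ⟨c, hc, rfl⟩ | ⟨k, rfl⟩
    · simpa using hc
    · exact congrFun hAx k
  -- independence with e_i
  have hi_not : (Pi.single i (1:ℝ) : Fin n → ℝ) ∉ Submodule.span ℝ b := by
    intro hmem
    have : ∀ v ∈ Submodule.span ℝ b, v ⬝ᵥ x = 0 := by
      intro v hv
      induction hv using Submodule.span_induction with
      | mem v hv => exact hkill v hv
      | zero => simp
      | add u v _ _ hu hv => rw [add_dotProduct, hu, hv, add_zero]
      | smul a v _ hv => rw [smul_dotProduct, hv, smul_zero]
    exact hi (by simpa using this _ hmem)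
  let u : Option b → (Fin n → ℝ) := fun o => o.elim (Pi.single i 1) (fun v => v.1)
  have hu : LinearIndependent ℝ u := by
    rw [linearIndependent_option]
    refine ⟨hbi, ?_⟩
    have : Set.range (u ∘ (fun a : b => (some a : Option b))) = b := by
      ext v; simp [u]
    rw [this]
    exact hi_not
  have huspan : Submodule.span ℝ (Set.range u) = ⊤ := by
    apply aux_span
    intro z hz
    have hz1 : (Pi.single i (1:ℝ) : Fin n → ℝ) ⬝ᵥ z = 0 := hz _ ⟨none, rfl⟩
    have hz2 : ∀ v ∈ Submodule.span ℝ b, v ⬝ᵥ z = 0 := by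
      intro v hv
      induction hv using Submodule.span_induction with
      | mem v hv => exact hz v ⟨some ⟨v, hv⟩, rfl⟩
      | zero => simp
      | add u v _ _ hu hv => rw [add_dotProduct, hu, hv, add_zero]
      | smul a v _ hv => rw [smul_dotProduct, hv, smul_zero]
    apply hmin z
    · funext k
      exact hz2 _ (hGb (Or.inr ⟨k, rfl⟩))
    · intro c hc
      simpa using hz2 _ (hGb (Or.inl ⟨c, hc, rfl⟩))
    · exact ⟨i, hi, by simpa using hz1⟩
  let bas := Module.Basis.mk hu (huspan ▸ le_rfl)
  let e : Fin n ≃ Option b := ((Pi.basisFun ℝ (Fin n)).indexEquiv bas)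
  let t := e.symm none
  -- integer rows
  let y : Fin n → ℤ := fun j => if 0 ≤ x j then 1 else -1
  have hy : ∀ j, |y j| = 1 := by
    intro j; simp only [y]; split_ifs <;> simp
  let wt : (Fin n → ℝ) → ℤ := fun v => if v ∈ E then 1 else (N : ℤ) - 1
  have hrow : ∀ v : b, ∃ w : Fin n → ℤ, (∀ k, (w k : ℝ) = v.1 k) ∧
      ∃ f : Fin n → ℤ, (∑ j, max (f j) 0 ≤ 1 ∧ ∑ j, max (-f j) 0 ≤ 1) ∧
      1 + ∑ j, |w j * y j - f j| ≤ wt v.1 := by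
    rintro ⟨v, hv⟩
    by_cases hvE : v ∈ E
    · obtain ⟨c, hc, rfl⟩ := id hvE
      refine ⟨Pi.single c 1, ?_, ?_⟩
      · intro k; simp only [Pi.single_apply]; split_ifs <;> simp
      · simp only [wt, if_pos hvE]
        exact aux_unit y hy c
    · rcases hbG hv with h | ⟨k, hk⟩
      · exact absurd h hvE
      · refine ⟨A k, ?_, ?_⟩
        · intro l; change _ = v l; rw [← hk]; simp [hA']
        · simp only [wt, if_neg hvE]
          have : ∃ j0, A k j0 ≠ 0 ∧ x j0 ≠ 0 := by
            by_contra! hcon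
            have hvs : v ∈ Submodule.span ℝ E := by
              rw [pi_eq_sum_univ' v]
              refine Submodule.sum_mem _ fun l _ => ?_
              by_cases hl : x l = 0
              · refine Submodule.smul_mem _ _ (Submodule.subset_span ⟨l, hl, ?_⟩)
                ext a; simp [Pi.single_apply, eq_comm]
              · have : v l = 0 := by
                  rw [← hk]
                  have : A k l = 0 := by
                    by_contra h; exact hl (hcon l h)
                  simp [hA', this]
                rw [this, zero_smul]; exact Submodule.zero_mem _
            have h1 : LinearIndepOn ℝ id (insert v E) :=
              hbi.mono (Set.insert_subset hv hEb)
            exact h1.notMem_span_of_insert hvE (by simpa using hvs)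
          obtain ⟨j0, h1, h2⟩ := this
          obtain ⟨⟨p, hp⟩, q, hq⟩ := aux_signs (A k) x
            (by simpa [hA', Matrix.mulVec, dotProduct] using congrFun hAx k) j0 h1 h2 y
            (fun _ => rfl)
          exact aux_row y hy (A k) N (hN k) p q hp hq
  choose w hw hwf using hrow
  let Q : Fin n → Matrix (Fin n) (Fin n) ℤ := fun l s => (e s).elim (Pi.single l 1) w
  have hofin : Finite (Option b) := Finite.of_equiv _ e
  have hbfin : Finite b := Finite.of_injective (some : b → Option b) (Option.some_injective _)
  have : Fintype b := Fintype.ofFinite _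
  have hbound : ∀ l, |(Q l).det| ≤ ((N : ℤ) - 1) ^ A'.rank := by
    intro l
    have h1 := aux_det' (Q l) y hy (fun s => (e s).elim 1 (fun v => wt v.1)) (by
      intro s
      rcases hs : e s with _ | v
      · simpa [Q, hs] using aux_unit y hy l
      · simpa [Q, hs] using hwf v)
    refine h1.trans ?_
    rw [e.prod_comp (fun o => o.elim 1 (fun v : b => wt v.1))]
    have h2 : ∏ o : Option b, o.elim 1 (fun v : b => wt v.1) = ∏ v : b, wt v.1 := by
      rw [Fintype.prod_option]
      simp
    rw [h2]
    simp only [wt]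
    rw [Finset.prod_ite, Finset.prod_const_one, one_mul, Finset.prod_const]
    refine pow_le_pow_right₀ (by omega) ?_
    rw [Matrix.rank_eq_finrank_span_row]
    let T := Finset.univ.filter (fun v : b => v.1 ∉ E)
    have hli : LinearIndependent ℝ (fun v : T => (⟨v.1.1, Submodule.subset_span (by
        rcases hbG v.1.2 with h | h
        · exact absurd h (Finset.mem_filter.mp v.2).2
        · exact h)⟩ : Submodule.span ℝ (Set.range A'))) := by
      apply LinearIndependent.of_comp (Submodule.subtype _)
      exact hbi.comp (fun v : T => v.1) Subtype.val_injective
    have := hli.fintype_card_le_finrank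
    rw [Fintype.card_coe] at this
    exact this
  let M : Matrix (Fin n) (Fin n) ℝ := fun s => u (e s)
  have het : e t = none := by simp [t]
  have hQM : ∀ l, (Q l).map (Int.cast : ℤ → ℝ) = M.updateRow t (Pi.single l 1) := by
    intro l
    ext s k
    by_cases hs : s = t
    · subst hs
      rw [Matrix.updateRow_self, Matrix.map_apply]
      simp only [Q, het, Option.elim, Pi.single_apply]
      split_ifs <;> simp
    · have : e s ≠ none := fun h => hs (by rw [← e.symm_apply_apply s, h])
      obtain ⟨v, hv⟩ := Option.ne_none_iff_exists'.mp this
      rw [Matrix.updateRow_ne hs, Matrix.map_apply]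
      simp only [Q, M, u, hv, Option.elim, hw]
  have hdet : ∀ l, (((Q l).det : ℤ) : ℝ) = (M.updateRow t (Pi.single l 1)).det := by
    intro l
    rw [← hQM]
    exact (Int.castRingHom ℝ).map_det (Q l)
  have hMi : M.updateRow t (Pi.single i 1) = M := by
    ext s k
    by_cases hs : s = t
    · subst hs
      rw [Matrix.updateRow_self]
      simp only [M, het, u, Option.elim]
    · rw [Matrix.updateRow_ne hs]
  have hMdet : M.det ≠ 0 := by
    have : LinearIndependent ℝ M.row := hu.comp e e.injective
    rw [Matrix.linearIndependent_rows_iff_isUnit, Matrix.isUnit_iff_isUnit_det] at this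
    exact this.ne_zero
  have hcr := aux_cramer M x t (by
    intro s hs
    have : e s ≠ none := fun h => hs (by rw [← e.symm_apply_apply s, h])
    obtain ⟨v, hv⟩ := Option.ne_none_iff_exists'.mp this
    simp only [M, u, hv]
    exact hkill v.1 v.2) i j
  rw [← hdet, ← hdet] at hcr
  have hQi : (Q i).det ≠ 0 := by
    have := hdet i
    rw [hMi] at this
    intro h0
    rw [h0] at this
    exact hMdet (by simpa using this.symm)
  have hQi1 : (1:ℝ) ≤ |((Q i).det : ℝ)| := by
    exact_mod_cast Int.one_le_abs hQi
  have hQj : |((Q j).det : ℝ)| ≤ ((N:ℝ) - 1) ^ A'.rank := by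
    exact_mod_cast hbound j
  have hxi : 0 < |x i| := abs_pos.mpr hi
  rw [div_le_iff₀ hxi]
  have habs := congrArg abs hcr
  rw [abs_mul, abs_mul] at habs
  nlinarith [abs_nonneg (x j), abs_nonneg (x i)]

theorem stmt0 {m n : ℕ} (A : Matrix (Fin m) (Fin n) ℤ) (hA : A ≠ 0)
    (hnorm : 3 ≤ normInf A) :
    omegaMat (A.map (Int.cast : ℤ → ℝ)) ≤
      ((normInf A : ℝ) - 1) ^ (A.map (Int.cast : ℤ → ℝ)).rank := by
  classical
  have hN1 : (0:ℝ) ≤ (normInf A : ℝ) - 1 := by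
    have : (3:ℝ) ≤ normInf A := by exact_mod_cast hnorm
    linarith
  have hN : ∀ i, ∑ j, |A i j| ≤ (normInf A : ℤ) := by
    intro i
    have h : ∑ j, (A i j).natAbs ≤ normInf A :=
      Finset.le_sup (f := fun i => ∑ j, (A i j).natAbs) (Finset.mem_univ i)
    have h' : ((∑ j, (A i j).natAbs : ℕ) : ℤ) ≤ normInf A := by exact_mod_cast h
    simpa using h'
  by_cases hker : ∃ x : Fin n → ℝ, x ≠ 0 ∧ (A.map (Int.cast : ℤ → ℝ)).mulVec x = 0
  · let p : ℕ → Prop := fun k => ∃ x : Fin n → ℝ, (x ≠ 0 ∧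
      (A.map (Int.cast : ℤ → ℝ)).mulVec x = 0) ∧ (Finset.univ.filter fun j => x j ≠ 0).card = k
    have hp : ∃ k, p k := by
      obtain ⟨x, hx⟩ := hker
      exact ⟨_, x, hx, rfl⟩
    obtain ⟨x, ⟨hx0, hAx⟩, hcard⟩ := Nat.find_spec hp
    have hle : omegaVec x ≤ ((normInf A : ℝ) - 1) ^ (A.map (Int.cast : ℤ → ℝ)).rank := by
      apply Real.sSup_le
      · rintro r ⟨i, j, hi, rfl⟩
        refine aux_main A _ hnorm hN x hx0 hAx ?_ i j hi
        intro z hz hsub ⟨l, hl, hzl⟩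
        by_contra hz0
        have h1 := Nat.find_min' hp ⟨z, ⟨hz0, hz⟩, rfl⟩
        rw [← hcard] at h1
        refine absurd h1 (not_le.mpr (Finset.card_lt_card ?_))
        rw [Finset.ssubset_iff_of_subset]
        · exact ⟨l, by simpa using hl, by simpa using hzl⟩
        · intro c hc
          simp only [Finset.mem_filter, Finset.mem_univ, true_and] at hc ⊢
          exact fun h => hc (hsub c h)
      · positivity
    refine le_trans (csInf_le ⟨0, ?_⟩ ⟨x, hx0, hAx, rfl⟩) hle
    rintro r ⟨z, _, _, rfl⟩
    apply Real.sSup_nonneg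
    rintro r ⟨i, j, _, rfl⟩
    positivity
  · have : {r : ℝ | ∃ x : Fin n → ℝ, x ≠ 0 ∧ (A.map (Int.cast : ℤ → ℝ)).mulVec x = 0 ∧
        r = omegaVec x} = ∅ := by
      ext r
      simp only [Set.mem_setOf_eq, Set.mem_empty_iff_false, iff_false]
      rintro ⟨x, h1, h2, _⟩
      exact hker ⟨x, h1, h2⟩
    rw [omegaMat, this, Real.sInf_empty]
    positivity
end

section
/- Let A be a nonzero m×n matrix with integer entries such that ‖A‖∞ = 1 or ‖A‖∞ = 2. Then the solution relative magnitude of A satisfies ω(A) = 0 or ω(A) = 1. -/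
lemma row_aux {n : ℕ} (a : Fin n → ℤ) (ha : ∑ j, (a j).natAbs ≤ 2) (x : Fin n → ℝ)
    (f : ℝ → ℝ) (hf : ∀ t, f (-t) = - f t) (hx : ∑ j, (a j : ℝ) * x j = 0) :
    ∑ j, (a j : ℝ) * f (x j) = 0 := by
  have f0 : f 0 = 0 := by
    have := hf 0
    simp only [neg_zero] at this
    linarith
  by_cases h0 : ∀ j, a j = 0
  · simp [h0]
  push Not at h0
  obtain ⟨j, hj⟩ := h0
  by_cases h1 : ∀ k, k ≠ j → a k = 0
  · have key : ∀ g : Fin n → ℝ, ∑ k, (a k : ℝ) * g k = a j * g j := fun g =>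
      Finset.sum_eq_single j (fun k _ hk => by simp [h1 k hk]) (by simp)
    rw [key] at hx
    rw [key (fun k => f (x k))]
    have hj' : (a j : ℝ) ≠ 0 := by exact_mod_cast hj
    have : x j = 0 := by simpa [hj'] using hx
    simp [this, f0]
  push Not at h1
  obtain ⟨k, hkj, hk⟩ := h1
  have hrest : ∀ l, l ≠ j → l ≠ k → a l = 0 := by
    intro l hlj hlk
    have h3 : ∑ i ∈ ({l, j, k} : Finset (Fin n)), (a i).natAbs ≤ 2 :=
      le_trans (Finset.sum_le_sum_of_subset (Finset.subset_univ _)) ha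
    rw [Finset.sum_insert (by simp [hlj, hlk]), Finset.sum_pair hkj.symm] at h3
    omega
  have h2 : ∑ i ∈ ({j, k} : Finset (Fin n)), (a i).natAbs ≤ 2 :=
      le_trans (Finset.sum_le_sum_of_subset (Finset.subset_univ _)) ha
  rw [Finset.sum_pair hkj.symm] at h2
  have key : ∀ g : Fin n → ℝ, ∑ l, (a l : ℝ) * g l = a j * g j + a k * g k := by
    intro g
    rw [← Finset.sum_pair (f := fun l => (a l : ℝ) * g l) hkj.symm]
    symm
    apply Finset.sum_subset (Finset.subset_univ _)
    intro l _ hl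
    simp only [Finset.mem_insert, Finset.mem_singleton, not_or] at hl
    simp [hrest l hl.1 hl.2]
  rw [key] at hx
  rw [key (fun k => f (x k))]
  have hj1 : a j = 1 ∨ a j = -1 := by omega
  have hk1 : a k = 1 ∨ a k = -1 := by omega
  have hp : ∀ s t : ℝ, s = t → f s = f t := fun s t h => by rw [h]
  rcases hj1 with h | h <;> rcases hk1 with h' | h' <;> rw [h, h'] at hx ⊢ <;> push_cast at hx ⊢
  · have := hp (x j) (-x k) (by linarith)
    rw [hf] at this; linarith
  · have := hp (x j) (x k) (by linarith)
    linarith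
  · have := hp (x j) (x k) (by linarith)
    linarith
  · have := hp (x j) (-x k) (by linarith)
    rw [hf] at this; linarith

lemma one_le_omegaVec {n : ℕ} (x : Fin n → ℝ) (hx : x ≠ 0) : 1 ≤ omegaVec x := by
  obtain ⟨i, hi⟩ := Function.ne_iff.mp hx
  have hi' : x i ≠ 0 := hi
  apply le_csSup
  · apply Set.Finite.bddAbove
    apply (Set.finite_range (fun p : Fin n × Fin n => |x p.2| / |x p.1|)).subset
    rintro r ⟨i, j, _, rfl⟩
    exact ⟨(i, j), rfl⟩
  · exact ⟨i, i, hi', (div_self (abs_ne_zero.mpr hi')).symm⟩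

theorem stmt1 {m n : ℕ} (A : Matrix (Fin m) (Fin n) ℤ) (hA : A ≠ 0)
    (hnorm : normInf A = 1 ∨ normInf A = 2) :
    omegaMat (A.map (Int.cast : ℤ → ℝ)) = 0 ∨ omegaMat (A.map (Int.cast : ℤ → ℝ)) = 1 := by
  have hrow : ∀ i, ∑ j, (A i j).natAbs ≤ 2 := by
    intro i
    have : ∑ j, (A i j).natAbs ≤ normInf A :=
      Finset.le_sup (f := fun i => ∑ j, (A i j).natAbs) (Finset.mem_univ i)
    omega
  by_cases hN : ∃ x : Fin n → ℝ, x ≠ 0 ∧ (A.map (Int.cast : ℤ → ℝ)).mulVec x = 0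
  · right
    obtain ⟨x, hx, hAx⟩ := hN
    obtain ⟨k, hk⟩ := Function.ne_iff.mp hx
    have hk' : x k ≠ 0 := hk
    let f : ℝ → ℝ := fun t => if |t| = |x k| then t else 0
    have hf : ∀ t, f (-t) = - f t := by
      intro t
      simp only [f, abs_neg]
      split_ifs <;> simp
    have hfk : f (x k) = x k := by simp [f]
    let y : Fin n → ℝ := fun j => f (x j)
    have hy : y ≠ 0 := fun h => hk' (by rw [← hfk]; exact congrFun h k)
    have hAy : (A.map (Int.cast : ℤ → ℝ)).mulVec y = 0 := by
      funext i
      exact row_aux (A i) (hrow i) x f hf (congrFun hAx i)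
    have hoy : omegaVec y = 1 := by
      apply le_antisymm _ (one_le_omegaVec y hy)
      apply Real.sSup_le _ zero_le_one
      rintro r ⟨i, j, hi, rfl⟩
      have hyi : |y i| = |x k| := by
        by_cases h : |x i| = |x k|
        · simp [y, f, h]
        · exact absurd (by simp [y, f, h]) hi
      have hyj : |y j| ≤ |x k| := by
        by_cases h : |x j| = |x k|
        · simp [y, f, h]
        · simp [y, f, h]
      rw [hyi]
      exact div_le_one_of_le₀ hyj (abs_nonneg _)
    apply le_antisymm
    · apply csInf_le
      · refine ⟨1, ?_⟩
        rintro r ⟨z, hz, _, rfl⟩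
        exact one_le_omegaVec z hz
      · exact ⟨y, hy, hAy, hoy.symm⟩
    · refine le_csInf (Set.nonempty_of_mem ⟨y, hy, hAy, rfl⟩) ?_
      rintro r ⟨z, hz, _, rfl⟩
      exact one_le_omegaVec z hz
  · left
    have : {r : ℝ | ∃ x : Fin n → ℝ, x ≠ 0 ∧ (A.map (Int.cast : ℤ → ℝ)).mulVec x = 0 ∧
        r = omegaVec x} = ∅ := by
      ext r
      simp only [Set.mem_ofPred_eq, Set.mem_empty_iff_false, iff_false]
      rintro ⟨x, hx, h, _⟩
      exact hN ⟨x, hx, h⟩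
    rw [omegaMat, this, Real.sInf_empty]
end

section
/- Fix integers k ≥ 1 and n ≥ 2. Let A be the (n−1)×n integer matrix whose i-th row encodes the equation k·x_i − x_{i+1} = 0, i.e., A_{i,i} = k, A_{i,i+1} = −1, and all other entries are 0. Then ‖A‖∞ = k+1, rank A = n−1, the null space of A is the one-dimensional span of the vector v = (1, k, k^2, …, k^{n−1}), and every nonzero x in the null space of A satisfies ω(x) = k^{n−1}; in particular ω(A) = k^{n−1}, so the bound ω(A) ≤ (‖A‖∞ − 1)^{rank A} is sharp. -/
lemma row_sum {k m : ℕ} (A : Matrix (Fin m) (Fin (m + 1)) ℤ)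
    (hA : ∀ (i : Fin m) (j : Fin (m + 1)),
      A i j = if (j : ℕ) = (i : ℕ) then (k : ℤ)
              else if (j : ℕ) = (i : ℕ) + 1 then -1 else 0) (i : Fin m) :
    ∑ j, (A i j).natAbs = k + 1 := by
  have h : ∀ j, (A i j).natAbs =
      (if j = i.castSucc then k else 0) + (if j = i.succ then 1 else 0) := by
    intro j
    rw [hA]
    simp only [Fin.ext_iff, Fin.val_castSucc, Fin.val_succ]
    split_ifs <;> first | omega | simp
  simp [h, Finset.sum_add_distrib]

lemma row_mul {k m : ℕ} (A : Matrix (Fin m) (Fin (m + 1)) ℤ)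
    (hA : ∀ (i : Fin m) (j : Fin (m + 1)),
      A i j = if (j : ℕ) = (i : ℕ) then (k : ℤ)
              else if (j : ℕ) = (i : ℕ) + 1 then -1 else 0) (x : Fin (m + 1) → ℝ) (i : Fin m) :
    (A.map (Int.cast : ℤ → ℝ)).mulVec x i = k * x i.castSucc - x i.succ := by
  have h : ∀ j, ((A i j : ℤ) : ℝ) * x j =
      (if j = i.castSucc then (k : ℝ) * x j else 0) - (if j = i.succ then x j else 0) := by
    intro j
    rw [hA]
    simp only [Fin.ext_iff, Fin.val_castSucc, Fin.val_succ]
    split_ifs <;> first | omega | simp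
  simp [Matrix.mulVec, dotProduct, h, Finset.sum_sub_distrib]

lemma omega_pow {k m : ℕ} (hk : 1 ≤ k) (c : ℝ) (hc : c ≠ 0) :
    omegaVec (fun j : Fin (m + 1) => c * (k : ℝ) ^ (j : ℕ)) = (k : ℝ) ^ m := by
  have hk1 : (1 : ℝ) ≤ k := by exact_mod_cast hk
  have hk0 : (0 : ℝ) < k := by linarith
  have hc' : 0 < |c| := abs_pos.mpr hc
  apply IsGreatest.csSup_eq
  constructor
  · refine ⟨0, Fin.last m, by simpa using hc, ?_⟩
    simp [abs_mul]
    field_simp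
  · rintro r ⟨i, j, -, rfl⟩
    simp only [abs_mul, abs_pow, Nat.abs_cast]
    rw [mul_div_mul_left _ _ hc'.ne', div_le_iff₀ (by positivity)]
    calc (k : ℝ) ^ (j : ℕ) ≤ (k : ℝ) ^ m := pow_le_pow_right₀ hk1 (by omega)
      _ ≤ (k : ℝ) ^ m * (k : ℝ) ^ (i : ℕ) :=
        le_mul_of_one_le_right (by positivity) (one_le_pow₀ hk1)

lemma main_aux {k m : ℕ} (hk : 1 ≤ k) (hm : 1 ≤ m)
    (A : Matrix (Fin m) (Fin (m + 1)) ℤ)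
    (hA : ∀ (i : Fin m) (j : Fin (m + 1)),
      A i j = if (j : ℕ) = (i : ℕ) then (k : ℤ)
              else if (j : ℕ) = (i : ℕ) + 1 then -1 else 0) :
    normInf A = k + 1 ∧
    (A.map (Int.cast : ℤ → ℝ)).rank = m ∧
    LinearMap.ker (A.map (Int.cast : ℤ → ℝ)).mulVecLin =
      Submodule.span ℝ {fun j : Fin (m + 1) => (k : ℝ) ^ (j : ℕ)} ∧
    (∀ x : Fin (m + 1) → ℝ, x ≠ 0 → (A.map (Int.cast : ℤ → ℝ)).mulVec x = 0 →
      omegaVec x = (k : ℝ) ^ m) ∧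
    omegaMat (A.map (Int.cast : ℤ → ℝ)) = (k : ℝ) ^ m ∧
    omegaMat (A.map (Int.cast : ℤ → ℝ)) =
      ((normInf A : ℝ) - 1) ^ (A.map (Int.cast : ℤ → ℝ)).rank := by
  have h1 : normInf A = k + 1 := by
    unfold normInf
    simp only [row_sum A hA]
    exact Finset.sup_const ⟨⟨0, hm⟩, Finset.mem_univ _⟩ _
  have hv0 : (fun j : Fin (m + 1) => (k : ℝ) ^ (j : ℕ)) ≠ 0 := by
    intro h
    simpa using congrFun h 0
  have hker : ∀ x : Fin (m + 1) → ℝ, (A.map (Int.cast : ℤ → ℝ)).mulVec x = 0 →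
      x = fun j : Fin (m + 1) => x 0 * (k : ℝ) ^ (j : ℕ) := by
    intro x hx
    funext j
    induction j using Fin.induction with
    | zero => simp
    | succ i ih =>
      have := congrFun hx i
      rw [row_mul A hA, ih] at this
      simp only [Fin.val_castSucc, Pi.zero_apply] at this
      rw [Fin.val_succ, pow_succ]
      linarith
  have hvk : (A.map (Int.cast : ℤ → ℝ)).mulVec (fun j : Fin (m + 1) => (k : ℝ) ^ (j : ℕ)) = 0 := by
    funext i
    rw [row_mul A hA]
    simp [pow_succ]
    ring
  have h3 : LinearMap.ker (A.map (Int.cast : ℤ → ℝ)).mulVecLin =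
      Submodule.span ℝ {fun j : Fin (m + 1) => (k : ℝ) ^ (j : ℕ)} := by
    apply le_antisymm
    · intro x hx
      rw [LinearMap.mem_ker, Matrix.mulVecLin_apply] at hx
      rw [Submodule.mem_span_singleton]
      exact ⟨x 0, (hker x hx).symm⟩
    · rw [Submodule.span_singleton_le_iff_mem, LinearMap.mem_ker, Matrix.mulVecLin_apply]
      exact hvk
  have h2 : (A.map (Int.cast : ℤ → ℝ)).rank = m := by
    have := LinearMap.finrank_range_add_finrank_ker (A.map (Int.cast : ℤ → ℝ)).mulVecLin
    rw [h3, finrank_span_singleton hv0, Module.finrank_fin_fun] at this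
    unfold Matrix.rank
    omega
  have h4 : ∀ x : Fin (m + 1) → ℝ, x ≠ 0 → (A.map (Int.cast : ℤ → ℝ)).mulVec x = 0 →
      omegaVec x = (k : ℝ) ^ m := by
    intro x hx0 hx
    have hx' := hker x hx
    have hc : x 0 ≠ 0 := by
      intro h
      apply hx0
      rw [hx', h]
      funext j
      simp
    rw [hx']
    exact omega_pow hk _ hc
  have h5 : omegaMat (A.map (Int.cast : ℤ → ℝ)) = (k : ℝ) ^ m := by
    apply IsLeast.csInf_eq
    refine ⟨⟨_, hv0, hvk, (h4 _ hv0 hvk).symm⟩, ?_⟩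
    rintro r ⟨x, hx0, hx, rfl⟩
    exact (h4 x hx0 hx).ge
  refine ⟨h1, h2, h3, h4, h5, ?_⟩
  rw [h5, h1, h2]
  simp

theorem stmt2 {k n : ℕ} (hk : 1 ≤ k) (hn : 2 ≤ n)
    (A : Matrix (Fin (n - 1)) (Fin n) ℤ)
    (hA : ∀ (i : Fin (n - 1)) (j : Fin n),
      A i j = if (j : ℕ) = (i : ℕ) then (k : ℤ)
              else if (j : ℕ) = (i : ℕ) + 1 then -1 else 0) :
    normInf A = k + 1 ∧
    (A.map (Int.cast : ℤ → ℝ)).rank = n - 1 ∧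
    LinearMap.ker (A.map (Int.cast : ℤ → ℝ)).mulVecLin =
      Submodule.span ℝ {fun j : Fin n => (k : ℝ) ^ (j : ℕ)} ∧
    (∀ x : Fin n → ℝ, x ≠ 0 → (A.map (Int.cast : ℤ → ℝ)).mulVec x = 0 →
      omegaVec x = (k : ℝ) ^ (n - 1)) ∧
    omegaMat (A.map (Int.cast : ℤ → ℝ)) = (k : ℝ) ^ (n - 1) ∧
    omegaMat (A.map (Int.cast : ℤ → ℝ)) =
      ((normInf A : ℝ) - 1) ^ (A.map (Int.cast : ℤ → ℝ)).rank := by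
  obtain ⟨m, rfl⟩ : ∃ m, n = m + 1 := ⟨n - 1, by omega⟩
  exact main_aux hk (by omega) A hA
end

section
/- Fix an integer k ≥ 2. Consider a linear system A x = b with A ∈ ℤ^{m×N} and b ∈ ℤ^m in which every equation (row i) is of one of the following two types: (1) x_j = ±1, i.e., the i-th row of A equals a standard basis vector e_j and b_i ∈ {−1, +1}; or (2) a homogeneous equation whose integer coefficient vector has ℓ1 norm at most k+1, i.e., Σ_j |A_{ij}| ≤ k+1 and b_i = 0 (this encodes equations ±x_{i_1} ± x_{i_2} ± … ± x_{i_{l+1}} = 0 with l ≤ k, where indices may repeat). Let n := rank A and assume n ≥ 1. If the system has a real solution, then it has a rational solution x ∈ ℚ^N such that |x_j| ≤ k^{n−1} for every coordinate j. -/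
lemma rowBound {N : ℕ} {T : Type} [Fintype T] [DecidableEq T] (k : ℕ) (hk : 2 ≤ k)
    (v : Fin N → ℚ) (w : T → ℚ) (τ : Fin N → T) (s : Fin N → ℚ)
    (hw : ∀ t, 0 < w t) (hv : ∀ c, v c = s c * w (τ c))
    (hs : ∀ c, |s c| = 1 ∨ |s c| ≤ 1 / k) (htop : ∀ c t, |v c| ≠ k * w t)
    (r : Fin N → ℤ) (hr : ∑ c, (r c).natAbs ≤ k + 1) (hrv : ∑ c, (r c : ℚ) * v c = 0) :
    ∑ t, (∑ c with τ c = t, (r c : ℚ) * s c) ^ 2 ≤ (k : ℚ) ^ 2 := by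
  have hkq : (2 : ℚ) ≤ k := by exact_mod_cast hk
  have hs1 : ∀ c, |s c| ≤ 1 := by
    intro c
    rcases hs c with h | h
    · exact h.le
    · refine h.trans ?_
      rw [div_le_one (by linarith)]; linarith
  set p : T → ℚ := fun t => ∑ c with τ c = t, (r c : ℚ) * s c with hp
  set y : T → ℕ := fun t => ∑ c with τ c = t, (r c).natAbs with hy
  have hysum : ∑ t, y t ≤ k + 1 := by
    rw [hy]; simp only
    rw [Finset.sum_fiberwise]; exact hr
  have hpy : ∀ t, |p t| ≤ y t := by
    intro t
    rw [hp, hy]; simp only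
    refine (Finset.abs_sum_le_sum_abs _ _).trans ?_
    push_cast
    refine Finset.sum_le_sum fun c _ => ?_
    rw [abs_mul]
    have : |(r c : ℚ)| = ((r c).natAbs : ℚ) := by simp [Nat.cast_natAbs]
    rw [← this]
    exact mul_le_of_le_one_right (abs_nonneg _) (hs1 c)
  have hpw : ∑ t, p t * w t = 0 := by
    rw [← hrv, hp]
    simp only
    rw [← Finset.sum_fiberwise (s := Finset.univ) (g := τ)]
    refine Finset.sum_congr rfl fun t _ => ?_
    rw [Finset.sum_mul]
    refine Finset.sum_congr rfl fun c hc => ?_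
    rw [hv c, (Finset.mem_filter.1 hc).2]; ring
  change ∑ t, p t ^ 2 ≤ _
  have hyq : (∑ t, (y t : ℚ)) ≤ k + 1 := by exact_mod_cast hysum
  by_cases hsmall : ∀ t, |p t| ≤ (k : ℚ) - 1
  · calc ∑ t, p t ^ 2 ≤ ∑ t, ((k : ℚ) - 1) * y t := by
          refine Finset.sum_le_sum fun t _ => ?_
          rw [← sq_abs, sq]
          exact mul_le_mul (hsmall t) (hpy t) (abs_nonneg _) (by linarith)
      _ = ((k : ℚ) - 1) * ∑ t, (y t : ℚ) := by rw [Finset.mul_sum]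
      _ ≤ ((k : ℚ) - 1) * (k + 1) := mul_le_mul_of_nonneg_left hyq (by linarith)
      _ ≤ _ := by nlinarith
  push Not at hsmall
  obtain ⟨t, ht⟩ := hsmall
  have hyt : k ≤ y t := by
    have : (k : ℚ) - 1 < y t := ht.trans_le (hpy t)
    have : (k : ℚ) < y t + 1 := by linarith
    have : k < y t + 1 := by exact_mod_cast this
    omega
  -- off-t weight
  have hoff : ∑ c with τ c ≠ t, (r c).natAbs + y t ≤ k + 1 := by
    have := Finset.sum_filter_add_sum_filter_not Finset.univ (fun c => τ c = t) (fun c => (r c).natAbs)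
    have e : ∑ c with τ c ≠ t, (r c).natAbs = ∑ c with ¬ τ c = t, (r c).natAbs := rfl
    rw [hy, e]; simp only; omega
  -- an off-t column
  have hptne : p t ≠ 0 := by
    intro h; rw [h] at ht; simp at ht; linarith
  have hsplit : p t * w t + ∑ c with τ c ≠ t, (r c : ℚ) * v c = 0 := by
    rw [← hrv, ← Finset.sum_filter_add_sum_filter_not Finset.univ (fun c => τ c = t)]
    congr 1
    rw [hp]; simp only
    rw [Finset.sum_mul]
    refine Finset.sum_congr rfl fun c hc => ?_
    rw [hv c, (Finset.mem_filter.1 hc).2]; ring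
  have hne : ∑ c with τ c ≠ t, (r c : ℚ) * v c ≠ 0 := by
    intro h
    rw [h, add_zero] at hsplit
    exact (mul_ne_zero hptne (hw t).ne') hsplit
  obtain ⟨c', hc', hc'0⟩ := Finset.exists_ne_zero_of_sum_ne_zero hne
  have hrc' : r c' ≠ 0 := by
    intro h; simp [h] at hc'0
  have hsum' := Finset.add_sum_erase _ (fun c => (r c).natAbs) hc'
  have h1 : 1 ≤ (r c').natAbs := Int.natAbs_pos.2 hrc'
  have hytk : y t = k := by omega
  have hrc1 : (r c').natAbs = 1 := by omega
  have herase : ∑ c ∈ (Finset.univ.filter (fun c => τ c ≠ t)).erase c', (r c).natAbs = 0 := by omega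
  have hzero : ∀ c ∈ (Finset.univ.filter (fun c => τ c ≠ t)).erase c', r c = 0 := by
    intro c hc
    have := (Finset.sum_eq_zero_iff.1 herase) c hc
    simpa using this
  have hval : ∑ c with τ c ≠ t, (r c : ℚ) * v c = r c' * v c' := by
    rw [← Finset.add_sum_erase _ _ hc', Finset.sum_eq_zero, add_zero]
    intro c hc; simp [hzero c hc]
  rw [hval] at hsplit
  have habs : |p t| * w t = |v c'| := by
    have h2 : p t * w t = - (r c' * v c') := by linarith
    have h3 := congrArg abs h2
    rw [abs_mul, abs_neg, abs_mul, abs_of_pos (hw t)] at h3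
    have : |(r c' : ℚ)| = 1 := by
      rw [← Int.cast_abs, Int.abs_eq_natAbs, hrc1]; simp
    rw [h3, this, one_mul]
  -- rest of squares
  have hrest : ∑ t' ∈ Finset.univ.erase t, p t' ^ 2 ≤ 1 := by
    have hyr : ∑ t' ∈ Finset.univ.erase t, y t' ≤ 1 := by
      have := Finset.add_sum_erase Finset.univ y (Finset.mem_univ t)
      omega
    have : ∀ t' ∈ Finset.univ.erase t, p t' ^ 2 ≤ (y t' : ℚ) := by
      intro t' ht'
      have h5 : y t' ≤ 1 := (Finset.single_le_sum (f := y) (fun _ _ => Nat.zero_le _) ht').trans hyr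
      have h5q : (y t' : ℚ) ≤ 1 := by exact_mod_cast h5
      have := hpy t'
      rw [← sq_abs]
      nlinarith [abs_nonneg (p t')]
    refine (Finset.sum_le_sum this).trans ?_
    exact_mod_cast hyr
  have hfin : |p t| ≤ k - 1 + 1 / k := by
    by_cases hall : ∀ c, τ c = t → r c ≠ 0 → |s c| = 1
    · exfalso
      -- p t is an integer
      have hint : ∃ z : ℤ, p t = z := by
        have : ∀ c, ∃ z : ℤ, τ c = t → (r c : ℚ) * s c = z := by
          intro c
          by_cases hc : τ c = t
          · by_cases h0 : r c = 0
            · exact ⟨0, fun _ => by simp [h0]⟩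
            · rcases eq_or_eq_neg_of_abs_eq (hall c hc h0) with h | h
              · exact ⟨r c, fun _ => by simp [h]⟩
              · exact ⟨-r c, fun _ => by simp [h]⟩
          · exact ⟨0, fun h => absurd h hc⟩
        choose z hz using this
        refine ⟨∑ c with τ c = t, z c, ?_⟩
        push_cast
        exact Finset.sum_congr rfl fun c hc => hz c (Finset.mem_filter.1 hc).2
      obtain ⟨z, hz⟩ := hint
      have hle : |p t| ≤ k := by have := hpy t; rwa [hytk] at this
      rw [hz] at ht hle
      have h6 : |z| = k := by
        have a1 : ((k : ℤ) : ℚ) - 1 < ((|z| : ℤ) : ℚ) := by push_cast; exact ht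
        have a2 : ((|z| : ℤ) : ℚ) ≤ ((k : ℤ) : ℚ) := by push_cast; exact hle
        have a1' : (k : ℤ) < |z| + 1 := by
          have : ((k : ℤ) : ℚ) < ((|z| + 1 : ℤ) : ℚ) := by push_cast; push_cast at a1; linarith
          exact_mod_cast this
        have a2' : |z| ≤ k := by exact_mod_cast a2
        omega
      have h7 : |p t| = k := by rw [hz, ← Int.cast_abs, h6]; simp
      exact htop c' t (by rw [← habs, h7])
    · push Not at hall
      obtain ⟨c, hct, hrc, hsc⟩ := hall
      have hsc' : |s c| ≤ 1 / k := (hs c).resolve_left hsc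
      have hcm : c ∈ Finset.univ.filter (fun c => τ c = t) := by simp [hct]
      have e1 : p t = r c * s c + ∑ d ∈ (Finset.univ.filter (fun c => τ c = t)).erase c, (r d : ℚ) * s d := by
        rw [Finset.add_sum_erase _ (fun d => (r d : ℚ) * s d) hcm]
      have e2 : y t = (r c).natAbs + ∑ d ∈ (Finset.univ.filter (fun c => τ c = t)).erase c, (r d).natAbs := by
        rw [Finset.add_sum_erase _ (fun d => (r d).natAbs) hcm]
      have e3 : |∑ d ∈ (Finset.univ.filter (fun c => τ c = t)).erase c, (r d : ℚ) * s d| ≤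
          ((∑ d ∈ (Finset.univ.filter (fun c => τ c = t)).erase c, (r d).natAbs : ℕ) : ℚ) := by
        refine (Finset.abs_sum_le_sum_abs _ _).trans ?_
        push_cast
        refine Finset.sum_le_sum fun c _ => ?_
        rw [abs_mul]
        have : |(r c : ℚ)| = ((r c).natAbs : ℚ) := by simp [Nat.cast_natAbs]
        rw [← this]
        exact mul_le_of_le_one_right (abs_nonneg _) (hs1 c)
      have e4 : (1 : ℚ) ≤ ((r c).natAbs : ℚ) := by
        exact_mod_cast Int.natAbs_pos.2 hrc
      have e5 : |(r c : ℚ) * s c| ≤ ((r c).natAbs : ℚ) * (1 / k) := by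
        rw [abs_mul]
        have : |(r c : ℚ)| = ((r c).natAbs : ℚ) := by simp [Nat.cast_natAbs]
        rw [this]
        exact mul_le_mul_of_nonneg_left hsc' (by linarith)
      have e6 : ((r c).natAbs : ℚ) + ((∑ d ∈ (Finset.univ.filter (fun c => τ c = t)).erase c, (r d).natAbs : ℕ) : ℚ) = k := by
        rw [← hytk, e2]; push_cast; rfl
      have e7 : (1 : ℚ) / k ≤ 1 := by
        rw [div_le_one (by linarith)]; linarith
      rw [e1]
      refine (abs_add_le _ _).trans ?_
      nlinarith
  rw [← Finset.add_sum_erase _ _ (Finset.mem_univ t)]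
  have hk0 : (0 : ℚ) < k := by linarith
  have g1 : p t ^ 2 ≤ (k - 1 + 1 / k : ℚ) ^ 2 := by
    rw [← sq_abs]
    exact pow_le_pow_left₀ (abs_nonneg _) hfin 2
  have g2 : ((k : ℚ) - 1 + 1 / k) ^ 2 + 1 ≤ k ^ 2 := by
    have e : (1 : ℚ) / k ≤ 1 / 2 := by
      apply one_div_le_one_div_of_le <;> linarith
    have e0 : (0 : ℚ) < 1 / k := by positivity
    have e' : (k : ℚ) * (1 / k) = 1 := by field_simp
    nlinarith
  linarith

lemma hadamardFin {n : ℕ} (M : Matrix (Fin n) (Fin n) ℝ) (c : Fin n → ℝ) (hc : ∀ i, 0 ≤ c i)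
    (h : ∀ i, ∑ j, M i j ^ 2 ≤ c i ^ 2) : |M.det| ≤ ∏ i, c i := by
  have : Fact (Module.finrank ℝ (EuclideanSpace ℝ (Fin n)) = n) := ⟨by simp⟩
  let b := EuclideanSpace.basisFun (Fin n) ℝ
  let o := b.toBasis.orientation
  let v : Fin n → EuclideanSpace ℝ (Fin n) := fun i => WithLp.toLp 2 (M i)
  have h1 := o.abs_volumeForm_apply_le v
  rw [o.volumeForm_robust' b v] at h1
  have h2 : b.toBasis.det v = M.det := by
    rw [Module.Basis.det_apply, ← Matrix.det_transpose]
    congr 1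
  rw [h2] at h1
  refine h1.trans (Finset.prod_le_prod (fun _ _ => norm_nonneg _) fun i _ => ?_)
  rw [EuclideanSpace.norm_eq]
  apply Real.sqrt_le_iff.2
  refine ⟨hc i, ?_⟩
  simpa [v] using h i

lemma hadamardRat {T : Type} [Fintype T] [DecidableEq T] (M : Matrix T T ℚ) (c : T → ℚ)
    (hc : ∀ i, 0 ≤ c i)
    (h : ∀ i, ∑ j, M i j ^ 2 ≤ c i ^ 2) : |M.det| ≤ ∏ i, c i := by
  let e := (Fintype.equivFin T).symm
  have h1 := hadamardFin ((M.map (Rat.cast : ℚ → ℝ)).submatrix e e) (fun i => (c (e i) : ℝ))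
    (fun i => by exact_mod_cast hc (e i)) (fun i => by
      have := h (e i)
      rw [← e.sum_comp] at this
      simp only [Matrix.submatrix_apply, Matrix.map_apply]
      exact_mod_cast this)
  rw [Matrix.det_submatrix_equiv_self] at h1
  have h2 : (M.map (Rat.cast : ℚ → ℝ)).det = (M.det : ℝ) := by
    have := (RingHom.map_det (Rat.castHom ℝ) M)
    simpa using this.symm
  rw [h2, e.prod_comp (fun i => (c i : ℝ))] at h1
  exact_mod_cast h1

lemma core {T : Type} [Fintype T] [DecidableEq T] (k : ℕ) (hk : 2 ≤ k)
    (w : T → ℚ) (l : T → ℕ) (P : Set (T → ℚ)) (q : T → ℚ)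
    (hP : ∀ p ∈ P, ∑ t, p t ^ 2 ≤ (k : ℚ) ^ 2)
    (hPint : ∀ p ∈ P, ∀ t, ∃ z : ℤ, p t * (k : ℚ) ^ l t = z)
    (hqint : ∀ t, ∃ z : ℤ, q t * (k : ℚ) ^ l t = z)
    (hPw : ∀ p ∈ P, ∑ t, p t * w t = 0) (hqw : |∑ t, q t * w t| = 1)
    (huniq : ∀ z : T → ℚ, (∀ p ∈ P, ∑ t, p t * z t = 0) → ∑ t, q t * z t = 0 → z = 0) (t : T) :
    |w t| ≤ (k : ℚ) ^ (Fintype.card T - 1 + ∑ t, l t) := by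
  have hkq : (2 : ℚ) ≤ k := by exact_mod_cast hk
  have hq0 : q ≠ 0 := by
    rintro rfl; simp at hqw
  have hspan : Submodule.span ℚ (P ∪ {q}) = ⊤ := by
    by_contra hne
    obtain ⟨f, hf0, hf⟩ := Submodule.exists_le_ker_of_lt_top _ (lt_top_iff_ne_top.2 hne)
    have hfe : ∀ p : T → ℚ, f p = ∑ t, p t * f (Pi.single t 1) := by
      intro p
      conv_lhs => rw [pi_eq_sum_univ' p]
      simp [map_sum]
    have hz := huniq (fun t => f (Pi.single t 1))
      (fun p hp => by
        rw [← hfe]; exact hf (Submodule.subset_span (Or.inl hp)))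
      (by rw [← hfe]; exact hf (Submodule.subset_span (Or.inr rfl)))
    apply hf0
    ext t
    simpa using congrFun hz t
  obtain ⟨b, hbt, hqb, hsb, hli⟩ := exists_linearIndepOn_id_extension
    (K := ℚ) (s := {q}) (t := P ∪ {q}) (by
      exact LinearIndepOn.singleton (v := id) hq0) (by simp)
  have hbs : ⊤ ≤ Submodule.span ℚ (Set.range ((↑) : b → (T → ℚ))) := by
    rw [Subtype.range_coe, ← hspan]
    exact Submodule.span_le.2 hsb
  have hli' : LinearIndependent ℚ ((↑) : b → (T → ℚ)) := hli
  let B := Module.Basis.mk hli' hbs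
  let e : T ≃ b := (Pi.basisFun ℚ T).indexEquiv B
  let M : Matrix T T ℚ := fun i => (e i : T → ℚ)
  let i0 : T := e.symm ⟨q, hqb rfl⟩
  have hMi0 : M i0 = q := by simp [M, i0]
  have hMP : ∀ i, i ≠ i0 → M i ∈ P := by
    intro i hi
    rcases hbt (e i).2 with h | h
    · exact h
    · exfalso; apply hi
      apply e.injective
      simp only [i0, Equiv.apply_symm_apply]
      exact Subtype.ext h
  have hdet : M.det ≠ 0 := by
    have : LinearIndependent ℚ M := hli'.comp e e.injective
    have h2 := Matrix.linearIndependent_rows_iff_isUnit.1 this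
    exact ((Matrix.isUnit_iff_isUnit_det _).1 h2).ne_zero
  -- integrality
  have hdlow : 1 ≤ |M.det| * (k : ℚ) ^ (∑ t, l t) := by
    have : ∀ i t, ∃ z : ℤ, M i t * (k : ℚ) ^ l t = z := by
      intro i t
      by_cases h : i = i0
      · rw [h, hMi0]; exact hqint t
      · exact hPint _ (hMP i h) t
    choose Z hZ using this
    have h1 : M * Matrix.diagonal (fun t => (k : ℚ) ^ l t) = (Matrix.of Z).map (Int.cast : ℤ → ℚ) := by
      ext i t
      simp [Matrix.mul_diagonal, hZ]
    have h2 := congrArg Matrix.det h1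
    rw [Matrix.det_mul, Matrix.det_diagonal, Finset.prod_pow_eq_pow_sum] at h2
    have h3 : ((Matrix.of Z).map (Int.cast : ℤ → ℚ)).det = ((Matrix.of Z).det : ℚ) := by
      have := (RingHom.map_det (Int.castRingHom ℚ) (Matrix.of Z))
      simpa using this.symm
    rw [h3] at h2
    have h4 : (Matrix.of Z).det ≠ 0 := by
      intro h
      rw [h] at h2
      have : (k : ℚ) ^ (∑ t, l t) ≠ 0 := pow_ne_zero _ (by linarith)
      exact (mul_ne_zero hdet this) (by simpa using h2)
    have h5 : 1 ≤ |(Matrix.of Z).det| := Int.one_le_abs h4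
    have h6 := congrArg abs h2
    rw [abs_mul, abs_of_nonneg (a := (k : ℚ) ^ (∑ t, l t)) (by positivity)] at h6
    rw [h6]
    exact_mod_cast h5
  -- Cramer
  set q1 := ∑ t, q t * w t with hq1
  have hMw : M.mulVec w = Pi.single i0 q1 := by
    ext i
    by_cases h : i = i0
    · subst h
      simp only [Pi.single_eq_same, Matrix.mulVec, dotProduct]
      rw [hMi0]
    · rw [Pi.single_eq_of_ne h]
      exact hPw _ (hMP i h)
  have hcr : M.det * w t = (M.updateRow i0 (Pi.single t 1)).det * q1 := by
    have h1 := congrArg (fun x => M.adjugate.mulVec x t) hMw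
    simp only [Matrix.mulVec_mulVec, Matrix.adjugate_mul] at h1
    rw [Matrix.smul_mulVec, Matrix.one_mulVec, Matrix.mulVec_single] at h1
    simp only [Pi.smul_apply, smul_eq_mul, Matrix.col_apply, Matrix.adjugate_apply] at h1
    rw [h1]; simp [mul_comm]
  have hup : |(M.updateRow i0 (Pi.single t 1)).det| ≤ (k : ℚ) ^ (Fintype.card T - 1) := by
    have h1 := hadamardRat (M.updateRow i0 (Pi.single t 1)) (Function.update (fun _ => (k : ℚ)) i0 1)
      (by
        intro i
        by_cases h : i = i0
        · subst h; simp
        · simp [Function.update_of_ne h])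
      (by
        intro i
        by_cases h : i = i0
        · subst h
          simp only [Matrix.updateRow_self, Function.update_self]
          rw [Finset.sum_eq_single t] <;> simp +contextual [Pi.single_apply]
        · rw [Function.update_of_ne h]
          simp only [Matrix.updateRow_ne h]
          exact hP _ (hMP i h))
    rw [Finset.prod_update_of_mem (Finset.mem_univ _)] at h1
    simpa [Finset.card_sdiff] using h1
  have h7 := congrArg abs hcr
  rw [abs_mul, abs_mul, hqw, mul_one] at h7
  rw [pow_add]
  have hK : (0 : ℚ) < (k : ℚ) ^ (∑ t, l t) := pow_pos (by linarith) _
  calc |w t| ≤ (|M.det| * (k : ℚ) ^ (∑ t, l t)) * |w t| := le_mul_of_one_le_left (abs_nonneg _) hdlow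
    _ = (|M.det| * |w t|) * (k : ℚ) ^ (∑ t, l t) := by ring
    _ ≤ _ := by
      rw [h7]; exact mul_le_mul_of_nonneg_right hup hK.le

lemma chains {N : ℕ} (k : ℕ) (hk : 2 ≤ k) (v : Fin N → ℚ) (hv0 : ∃ c, v c ≠ 0) :
    ∃ (T : Type) (_ : Fintype T) (_ : DecidableEq T) (w : T → ℚ) (τ : Fin N → T) (s : Fin N → ℚ)
      (l : T → ℕ), (∀ t, 0 < w t) ∧ (∀ c, v c = s c * w (τ c)) ∧
      (∀ c, |s c| = 1 ∨ |s c| ≤ 1 / k) ∧ (∀ c t, |v c| ≠ k * w t) ∧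
      (∀ t, ∃ c, τ c = t ∧ |s c| = 1) ∧ (∀ c, ∃ z : ℤ, s c * (k : ℚ) ^ l (τ c) = z) ∧
      Fintype.card T + ∑ t, l t = (Finset.univ.filter (fun c => v c ≠ 0)).card := by
  classical
  have hkq : (2 : ℚ) ≤ k := by exact_mod_cast hk
  have hk1 : (1 : ℚ) < k := by linarith
  have hex : ∀ c, v c ≠ 0 → ∃ i : ℕ, ∀ c', |v c'| ≠ (k : ℚ) ^ (i + 1) * |v c| := by
    intro c hc
    by_contra hcon
    push Not at hcon
    choose g hg using hcon
    have hinj : Function.Injective g := by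
      intro i j hij
      have h1 := hg i
      rw [hij, hg j] at h1
      have h2 := mul_right_cancel₀ (abs_ne_zero.2 hc) h1
      have := pow_right_injective₀ (by linarith) hk1.ne' h2
      omega
    exact not_injective_infinite_finite g hinj
  let e : Fin N → ℕ := fun c => if h : v c ≠ 0 then Nat.find (hex c h) else 0
  have he1 : ∀ c, v c ≠ 0 → ∀ c', |v c'| ≠ (k : ℚ) ^ (e c + 1) * |v c| := by
    intro c h
    simp only [e, dif_pos h]
    exact Nat.find_spec (hex c h)
  have he2 : ∀ c, v c ≠ 0 → ∀ i ≤ e c, ∃ c', |v c'| = (k : ℚ) ^ i * |v c| := by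
    intro c h i hi
    rcases i with _ | i
    · exact ⟨c, by simp⟩
    · have : i < Nat.find (hex c h) := by
        simp only [e, dif_pos h] at hi; omega
      have := Nat.find_min (hex c h) this
      push Not at this
      exact this
  -- uniqueness of e
  have he3 : ∀ c, v c ≠ 0 → ∀ i, (∀ c', |v c'| ≠ (k : ℚ) ^ (i + 1) * |v c|) →
      (∀ j ≤ i, ∃ c', |v c'| = (k : ℚ) ^ j * |v c|) → e c = i := by
    intro c hc i h1 h2
    rcases lt_trichotomy (e c) i with h | h | h
    · obtain ⟨c', h'⟩ := h2 (e c + 1) h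
      exact absurd h' (he1 c hc c')
    · exact h
    · obtain ⟨c', h'⟩ := he2 c hc (i + 1) h
      exact absurd h' (h1 c')
  let S : Set ℚ := {t | (∃ c, v c ≠ 0 ∧ |v c| = t) ∧ ∀ c, |v c| ≠ k * t}
  have hSfin : S.Finite := (Set.finite_range (fun c => |v c|)).subset (by
    rintro t ⟨⟨c, _, h⟩, _⟩; exact ⟨c, h⟩)
  let _ : Fintype S := hSfin.fintype
  have hmem : ∀ c, v c ≠ 0 → (k : ℚ) ^ e c * |v c| ∈ S := by
    intro c hc
    refine ⟨?_, ?_⟩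
    · obtain ⟨c', h⟩ := he2 c hc (e c) le_rfl
      refine ⟨c', ?_, h⟩
      rw [← abs_ne_zero, h]
      exact mul_ne_zero (pow_ne_zero _ (by linarith)) (abs_ne_zero.2 hc)
    · intro c' h
      apply he1 c hc c'
      rw [h]; ring
  obtain ⟨c0, hc0⟩ := hv0
  let τ : Fin N → S := fun c => if h : v c ≠ 0 then ⟨_, hmem c h⟩ else ⟨_, hmem c0 hc0⟩
  have hτ : ∀ c, v c ≠ 0 → ((τ c : S) : ℚ) = (k : ℚ) ^ e c * |v c| := by
    intro c h
    simp only [τ, dif_pos h]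
  let s : Fin N → ℚ := fun c => (SignType.sign (v c) : ℚ) / (k : ℚ) ^ e c
  have hsabs : ∀ c, v c ≠ 0 → |s c| = 1 / (k : ℚ) ^ e c := by
    intro c h
    simp only [s, abs_div]
    rw [abs_of_pos (a := (k : ℚ) ^ e c) (pow_pos (by linarith) _)]
    congr 1
    rcases lt_or_gt_of_ne h with h | h
    · simp [sign_neg h]
    · simp [sign_pos h]
  have hs0 : ∀ c, v c = 0 → s c = 0 := by
    intro c h; simp [s, h]
  let F : S → Finset (Fin N) := fun t => Finset.univ.filter (fun c => v c ≠ 0 ∧ τ c = t)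
  have htopc : ∀ t : S, ∃ c, v c ≠ 0 ∧ e c = 0 ∧ τ c = t := by
    rintro ⟨t, ⟨c, hc, hct⟩, ht2⟩
    have hec : e c = 0 := by
      apply he3 c hc
      · intro c'; rw [hct]; simpa using ht2 c'
      · intro j hj; exact ⟨c, by simp [Nat.le_zero.1 hj]⟩
    refine ⟨c, hc, hec, ?_⟩
    apply Subtype.ext
    rw [hτ c hc, hec]; simpa using hct
  have hFpos : ∀ t, 1 ≤ (F t).card := by
    intro t
    obtain ⟨c, h1, _, h2⟩ := htopc t
    exact Finset.card_pos.2 ⟨c, by simp [F, h1, h2]⟩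
  have hel : ∀ c, v c ≠ 0 → e c ≤ (F (τ c)).card - 1 := by
    intro c hc
    have h1 : ∀ i : Fin (e c + 1), ∃ c', |v c'| = (k : ℚ) ^ (i : ℕ) * |v c| := fun i =>
      he2 c hc i (by omega)
    choose g hg using h1
    have hgne : ∀ i, v (g i) ≠ 0 := by
      intro i
      rw [← abs_ne_zero, hg]
      exact mul_ne_zero (pow_ne_zero _ (by linarith)) (abs_ne_zero.2 hc)
    have hinj : Function.Injective g := by
      intro i j hij
      have h1 := hg i
      rw [hij, hg j] at h1
      have h2 := mul_right_cancel₀ (abs_ne_zero.2 hc) h1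
      have := pow_right_injective₀ (by linarith) hk1.ne' h2
      exact Fin.ext this.symm
    have hge : ∀ i, e (g i) = e c - i := by
      intro i
      have hi : (i : ℕ) ≤ e c := by omega
      apply he3 _ (hgne i)
      · intro c' h
        apply he1 c hc c'
        rw [h, hg, ← mul_assoc, ← pow_add]
        congr 2; omega
      · intro j hj
        obtain ⟨c', h⟩ := he2 c hc (j + i) (by omega)
        exact ⟨c', by rw [h, hg, pow_add]; ring⟩
    have hgF : ∀ i, g i ∈ F (τ c) := by
      intro i
      simp only [F, Finset.mem_filter, Finset.mem_univ, true_and]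
      refine ⟨hgne i, Subtype.ext ?_⟩
      rw [hτ _ (hgne i), hτ c hc, hge, hg, ← mul_assoc, ← pow_add]
      congr 2; omega
    have : Fintype.card (Fin (e c + 1)) ≤ (F (τ c)).card := by
      rw [← Finset.card_univ]
      exact Finset.card_le_card_of_injOn g (fun i _ => hgF i) hinj.injOn
    simp at this
    omega
  refine ⟨S, inferInstance, inferInstance, fun t => t, τ, s, fun t => (F t).card - 1, ?_, ?_, ?_, ?_,
    ?_, ?_, ?_⟩
  · rintro ⟨t, ⟨c, hc, hct⟩, ht2⟩
    simp only
    rw [← hct]; exact abs_pos.2 hc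
  · intro c
    by_cases hc : v c = 0
    · rw [hs0 c hc, hc]; simp
    · simp only
      rw [hτ c hc]
      simp only [s]
      have : (k : ℚ) ^ e c ≠ 0 := pow_ne_zero _ (by linarith)
      field_simp
      exact (sign_mul_abs _).symm
  · intro c
    by_cases hc : v c = 0
    · right; rw [hs0 c hc]; simp
    · rw [hsabs c hc]
      by_cases h : e c = 0
      · left; simp [h]
      · right
        apply one_div_le_one_div_of_le (by linarith)
        exact le_self_pow₀ hk1.le h
  · rintro c ⟨t, ht⟩
    exact ht.2 c
  · intro t
    obtain ⟨c, h1, h2, h3⟩ := htopc t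
    exact ⟨c, h3, by rw [hsabs c h1, h2]; simp⟩
  · intro c
    by_cases hc : v c = 0
    · exact ⟨0, by rw [hs0 c hc]; simp⟩
    · refine ⟨(SignType.sign (v c) : ℤ) * (k : ℤ) ^ ((F (τ c)).card - 1 - e c), ?_⟩
      simp only [s]
      have : (k : ℚ) ^ e c ≠ 0 := pow_ne_zero _ (by linarith)
      rw [div_mul_eq_mul_div, div_eq_iff this]
      push_cast
      rw [mul_assoc, ← pow_add, Nat.sub_add_cancel (hel c hc)]
  · have h1 : (Finset.univ.filter (fun c => v c ≠ 0)).card = ∑ t, (F t).card := by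
      rw [Finset.card_eq_sum_card_fiberwise (f := τ) (t := Finset.univ) (by simp)]
      refine Finset.sum_congr rfl fun t _ => ?_
      simp only [F, Finset.filter_filter]
    rw [h1, ← Finset.card_univ, Finset.card_eq_sum_ones, ← Finset.sum_add_distrib]
    refine Finset.sum_congr rfl fun t _ => ?_
    have := hFpos t
    omega

theorem stmt3 {m N : ℕ} (k : ℕ) (hk : 2 ≤ k)
    (A : Matrix (Fin m) (Fin N) ℤ) (b : Fin m → ℤ)
    (hrows : ∀ i : Fin m,
      ((∃ j : Fin N, (∀ j' : Fin N, A i j' = if j' = j then 1 else 0)) ∧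
        (b i = 1 ∨ b i = -1)) ∨
      ((∑ j, (A i j).natAbs) ≤ k + 1 ∧ b i = 0))
    (hrank : 1 ≤ (A.map (Int.cast : ℤ → ℚ)).rank)
    (hsol : ∃ x : Fin N → ℝ,
      (A.map (Int.cast : ℤ → ℝ)).mulVec x = fun i => (b i : ℝ)) :
    ∃ x : Fin N → ℚ,
      (A.map (Int.cast : ℤ → ℚ)).mulVec x = (fun i => (b i : ℚ)) ∧
      ∀ j, |x j| ≤ (k : ℚ) ^ ((A.map (Int.cast : ℤ → ℚ)).rank - 1) := by
  classical
  have hkq : (2 : ℚ) ≤ k := by exact_mod_cast hk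
  set A' : Matrix (Fin m) (Fin N) ℚ := A.map (Int.cast : ℤ → ℚ) with hA'
  -- rational solution
  have hex : ∃ x : Fin N → ℚ, A'.mulVec x = fun i => (b i : ℚ) := by
    obtain ⟨x, hx⟩ := hsol
    obtain ⟨f, hf⟩ := LinearMap.exists_leftInverse_of_injective
      (Algebra.linearMap ℚ ℝ) (LinearMap.ker_eq_bot.2 (algebraMap ℚ ℝ).injective)
    have hfq : ∀ q : ℚ, f (q : ℝ) = q := fun q => by
      have := LinearMap.congr_fun hf q
      simpa using this
    refine ⟨fun j => f (x j), ?_⟩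
    ext i
    have h1 := congrArg f (congrFun hx i)
    simp only [Matrix.mulVec, dotProduct, Matrix.map_apply, map_sum] at h1
    simp only [Matrix.mulVec, dotProduct, hA', Matrix.map_apply]
    have h2 : f (b i : ℝ) = b i := by
      have := hfq (b i); simpa using this
    rw [← h2, ← h1]
    refine Finset.sum_congr rfl fun j _ => ?_
    have : ((A i j : ℤ) : ℝ) * x j = ((A i j : ℤ) : ℚ) • x j := by
      rw [Rat.smul_def]; simp
    rw [this, map_smul]; simp
  have hex' : ∃ n : ℕ, ∃ x : Fin N → ℚ, A'.mulVec x = (fun i => (b i : ℚ)) ∧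
      (Finset.univ.filter (fun c => x c ≠ 0)).card = n := by
    obtain ⟨x, hx⟩ := hex
    exact ⟨_, x, hx, rfl⟩
  obtain ⟨v, hvA, hvn⟩ := Nat.find_spec hex'
  have hmin : ∀ x : Fin N → ℚ, A'.mulVec x = (fun i => (b i : ℚ)) →
      (Finset.univ.filter (fun c => v c ≠ 0)).card ≤ (Finset.univ.filter (fun c => x c ≠ 0)).card := by
    intro x hx
    rw [hvn]
    exact Nat.find_min' hex' ⟨x, hx, rfl⟩
  refine ⟨v, hvA, ?_⟩
  have hinj : ∀ y : Fin N → ℚ, (∀ c, v c = 0 → y c = 0) → A'.mulVec y = 0 → y = 0 := by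
    intro y hy hAy
    by_contra hne
    obtain ⟨c, hc⟩ := Function.ne_iff.1 hne
    simp only [Pi.zero_apply] at hc
    have hvc : v c ≠ 0 := fun h => hc (hy c h)
    have h1 := hmin (v - (v c / y c) • y) (by
      rw [Matrix.mulVec_sub, Matrix.mulVec_smul, hAy, hvA]; simp)
    have h2 : (Finset.univ.filter (fun d => (v - (v c / y c) • y) d ≠ 0)) ⊂
        (Finset.univ.filter (fun d => v d ≠ 0)) := by
      rw [Finset.ssubset_iff_of_subset]
      · refine ⟨c, by simp [hvc], ?_⟩
        simp [div_mul_cancel₀ _ hc]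
      · intro d hd
        simp only [Finset.mem_filter, Finset.mem_univ, true_and] at hd ⊢
        intro h
        apply hd
        simp [h, hy d h]
    exact absurd (Finset.card_lt_card h2) (by omega)
  have hrk : (Finset.univ.filter (fun c => v c ≠ 0)).card ≤ A'.rank := by
    have hli : LinearIndependent ℚ (fun c : {c // v c ≠ 0} => A'.col c) := by
      rw [Fintype.linearIndependent_iff]
      intro g hg c
      have h1 := hinj (fun d => if h : v d ≠ 0 then g ⟨d, h⟩ else 0) (by
        intro d hd; simp [hd]) (by
        rw [← hg]
        ext i
        simp only [Matrix.mulVec, dotProduct, Finset.sum_apply, Pi.smul_apply, Matrix.col_apply,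
          smul_eq_mul]
        rw [← Finset.sum_filter_add_sum_filter_not Finset.univ (fun c => v c ≠ 0)]
        rw [Finset.sum_eq_zero (s := Finset.univ.filter (fun c => ¬ v c ≠ 0)), add_zero]
        · rw [Finset.sum_subtype (p := fun c => v c ≠ 0) _ (by simp)]
          refine Finset.sum_congr rfl fun d _ => ?_
          rw [dif_pos d.2, mul_comm]
        · intro d hd
          rw [dif_neg (Finset.mem_filter.1 hd).2, mul_zero])
      have := congrFun h1 c
      simpa [c.2] using this
    have h2 := finrank_span_eq_card hli
    rw [Matrix.rank_eq_finrank_span_cols]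
    rw [← Fintype.card_subtype, ← h2]
    apply Submodule.finrank_mono
    apply Submodule.span_mono
    rintro _ ⟨c, rfl⟩
    exact ⟨c, rfl⟩
  by_cases hb : ∀ i, b i = 0
  · have hv : v = 0 := hinj v (fun _ h => h) (by rw [hvA]; ext i; simp [hb i])
    intro j
    rw [hv]
    simp
  push Not at hb
  obtain ⟨i0, hi0⟩ := hb
  obtain ⟨⟨j0, hj0⟩, hb0⟩ := (hrows i0).resolve_right (fun h => hi0 h.2)
  have hrow1 : ∀ i j, (∀ j' : Fin N, A i j' = if j' = j then 1 else 0) → ∀ y : Fin N → ℚ,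
      A'.mulVec y i = y j := by
    intro i j h y
    simp [Matrix.mulVec, dotProduct, hA', h]
  have hvj0 : v j0 = b i0 := by
    rw [← hrow1 i0 j0 hj0 v, hvA]
  have hvj0abs : |v j0| = 1 := by
    rw [hvj0]; rcases hb0 with h | h <;> simp [h]
  have hvj0ne : v j0 ≠ 0 := by
    intro h; rw [h] at hvj0abs; simp at hvj0abs
  obtain ⟨T, _, _, w, τ, s, l, hw, hv, hs, htop, hsurj, hint, hcard⟩ := chains k hk v ⟨j0, hvj0ne⟩
  let φ : (Fin N → ℤ) → T → ℚ := fun r t => ∑ c with τ c = t, (r c : ℚ) * s c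
  have hφ : ∀ (r : Fin N → ℤ) (z : T → ℚ), ∑ t, φ r t * z t = ∑ c, (r c : ℚ) * (s c * z (τ c)) := by
    intro r z
    rw [← Finset.sum_fiberwise (s := Finset.univ) (g := τ)]
    refine Finset.sum_congr rfl fun t _ => ?_
    rw [Finset.sum_mul]
    refine Finset.sum_congr rfl fun c hc => ?_
    rw [(Finset.mem_filter.1 hc).2]; ring
  have hφint : ∀ r t, ∃ z : ℤ, φ r t * (k : ℚ) ^ l t = z := by
    intro r t
    choose Z hZ using hint
    refine ⟨∑ c with τ c = t, r c * Z c, ?_⟩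
    push_cast
    simp only [φ]
    rw [Finset.sum_mul]
    refine Finset.sum_congr rfl fun c hc => ?_
    rw [← hZ c, (Finset.mem_filter.1 hc).2]; ring
  have hq : ∀ z : T → ℚ, ∑ t, φ (Pi.single j0 1) t * z t = s j0 * z (τ j0) := by
    intro z
    rw [hφ]
    rw [Finset.sum_eq_single j0]
    · simp
    · intro c _ hc; simp [Pi.single_eq_of_ne hc]
    · simp
  have hcore := core k hk w l {p | ∃ r : Fin N → ℤ, ∑ c, (r c).natAbs ≤ k + 1 ∧
      ∑ c, (r c : ℚ) * v c = 0 ∧ p = φ r} (φ (Pi.single j0 1))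
    (by
      rintro p ⟨r, h1, h2, rfl⟩
      exact rowBound k hk v w τ s hw hv hs htop r h1 h2)
    (by
      rintro p ⟨r, h1, h2, rfl⟩
      exact hφint r)
    (hφint _)
    (by
      rintro p ⟨r, h1, h2, rfl⟩
      rw [hφ, ← h2]
      exact Finset.sum_congr rfl fun c _ => by rw [← hv c])
    (by rw [hq, ← hv, hvj0abs])
    (by
      intro z hz hqz
      rw [hq] at hqz
      have hy := hinj (fun c => s c * z (τ c))
        (by
          intro c hc
          have := hv c
          rw [hc] at this
          have : s c = 0 := by
            rcases mul_eq_zero.1 this.symm with h | h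
            · exact h
            · exact absurd h (hw _).ne'
          simp [this])
        (by
          ext i
          simp only [Pi.zero_apply]
          rcases hrows i with ⟨⟨j, hj⟩, hbi⟩ | ⟨h1, h2⟩
          · rw [hrow1 i j hj]
            by_cases hjj : j = j0
            · rw [hjj]; exact hqz
            -- the row  x_j * b_i - x_{j0} * b_{i0}
            have hvj : v j = b i := by
              rw [← hrow1 i j hj v, hvA]
            have hz1 := hz _ ⟨Pi.single j (b i) - Pi.single j0 (b i0), by
              refine le_trans ?_ (show 2 ≤ k + 1 by omega)
              calc ∑ c, ((Pi.single j (b i) - Pi.single j0 (b i0) : Fin N → ℤ) c).natAbs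
                  ≤ ∑ c, ((Pi.single j 1 : Fin N → ℕ) c + (Pi.single j0 1 : Fin N → ℕ) c) := by
                    refine Finset.sum_le_sum fun c _ => ?_
                    simp only [Pi.sub_apply, Pi.single_apply]
                    split_ifs <;> omega
                _ = 2 := by simp [Finset.sum_add_distrib], by
              simp only [Pi.sub_apply, Int.cast_sub, sub_mul, Finset.sum_sub_distrib, Pi.single_apply]
              simp [hvj, hvj0]
              rcases hbi with h | h <;> rcases hb0 with h' | h' <;> simp [h, h'], rfl⟩
            rw [hφ] at hz1
            simp only [Pi.sub_apply, Int.cast_sub, sub_mul, Finset.sum_sub_distrib, Pi.single_apply] at hz1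
            simp [hqz] at hz1
            rcases hz1 with h | h
            · rcases hbi with h' | h' <;> omega
            · rcases h with h | h <;> simp [h]
          · have := hz _ ⟨A i, h1, by
              have := congrFun hvA i
              rw [h2] at this
              simpa [Matrix.mulVec, dotProduct, hA'] using this, rfl⟩
            rw [hφ] at this
            simpa [Matrix.mulVec, dotProduct, hA'] using this)
      ext t
      obtain ⟨c, hc, hsc⟩ := hsurj t
      have h1 := congrFun hy c
      simp only [Pi.zero_apply] at h1 ⊢
      rw [← hc]
      rcases mul_eq_zero.1 h1 with h | h
      · rw [h] at hsc; simp at hsc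
      · exact h)
  intro j
  have hs1 : |s j| ≤ 1 := by
    rcases hs j with h | h
    · exact h.le
    · refine h.trans ?_
      rw [div_le_one (by linarith)]; linarith
  have hT : 1 ≤ Fintype.card T := Fintype.card_pos_iff.2 ⟨τ j0⟩
  calc |v j| = |s j| * |w (τ j)| := by rw [hv j, abs_mul]
    _ ≤ |w (τ j)| := mul_le_of_le_one_left (abs_nonneg _) hs1
    _ ≤ _ := hcore (τ j)
    _ ≤ _ := pow_le_pow_right₀ (by linarith) (by omega)
end

section
/- Let n ≥ 2 and consider a finite system of linear equations in the variables x_1, …, x_n, in which every equation is of one of the two forms x_i + x_j = x_k (with i, j, k ∈ {1,…,n}, not necessarily distinct) or x_l = 1 (with l ∈ {1,…,n}). If the system has a real solution, then it has a rational solution (x_1,…,x_n) ∈ ℚ^n with |x_i| ≤ 2^{n−1} for all 1 ≤ i ≤ n. -/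
def S4D (t : ℚ) : Prop := t = 0 ∨ ∃ a : ℕ, t = (1 / 2) ^ a

def S4R {n : ℕ} (v : Fin n → ℚ) : Prop :=
  ∃ i j k α β γ, S4D α ∧ S4D β ∧ S4D γ ∧
    v = Pi.single i α + Pi.single j β - Pi.single k γ

theorem S4D.nonneg {t : ℚ} (h : S4D t) : 0 ≤ t := by
  rcases h with rfl | ⟨a, rfl⟩ <;> positivity

theorem S4D.le_one {t : ℚ} (h : S4D t) : t ≤ 1 := by
  rcases h with rfl | ⟨a, rfl⟩
  · norm_num
  · exact pow_le_one₀ (by norm_num) (by norm_num)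

theorem S4D.eq_or {t : ℚ} (h : S4D t) : t = 1 ∨ t ≤ 1 / 2 := by
  rcases h with rfl | ⟨a, rfl⟩
  · norm_num
  · rcases a with _ | a
    · left; simp
    · right
      rw [pow_succ]
      have : ((1:ℚ) / 2) ^ a ≤ 1 := pow_le_one₀ (by norm_num) (by norm_num)
      linarith

theorem S4D.mul {s t : ℚ} (hs : S4D s) (h : S4D t) : S4D (s * t) := by
  rcases hs with rfl | ⟨b, rfl⟩
  · left; simp
  rcases h with rfl | ⟨a, rfl⟩
  · left; simp
  · right; exact ⟨b + a, by rw [pow_add]⟩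

theorem S4D.zero : S4D 0 := Or.inl rfl
theorem S4D.one : S4D 1 := Or.inr ⟨0, by simp⟩

theorem S4D.ratio {s t : ℚ} (hs : S4D s) (ht : S4D t) (hs0 : s ≠ 0) (ht0 : t ≠ 0) :
    S4D (t / (2 * s)) ∨ S4D (2 * s / t) := by
  rcases hs with rfl | ⟨a, rfl⟩
  · exact absurd rfl hs0
  rcases ht with rfl | ⟨c, rfl⟩
  · exact absurd rfl ht0
  rcases le_total a (c + 1) with h | h
  · left; right
    obtain ⟨m, hm⟩ := Nat.exists_eq_add_of_le h
    refine ⟨m, ?_⟩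
    have : ((1:ℚ) / 2) ^ (c + 1) = (1 / 2) ^ (a + m) := by rw [hm]
    rw [pow_succ, pow_add] at this
    rw [div_eq_iff (by positivity)]
    linarith
  · right; right
    obtain ⟨m, hm⟩ := Nat.exists_eq_add_of_le h
    refine ⟨m, ?_⟩
    rw [hm, div_eq_iff (by positivity)]
    ring

theorem S4R.dich {n : ℕ} {v : Fin n → ℚ} (h : S4R v) :
    v ⬝ᵥ v ≤ 4 ∨ ∃ x y c d, x ≠ y ∧ c ≠ 0 ∧ d ≠ 0 ∧ S4D (d / c) ∧ S4R (Pi.single x c : Fin n → ℚ) ∧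
      v = Pi.single x c - Pi.single y d := by
  obtain ⟨i, j, k, α, β, γ, hα, hβ, hγ, rfl⟩ := h
  have a0 := hα.nonneg
  have b0 := hβ.nonneg
  have c0 := hγ.nonneg
  have a1 := hα.le_one
  have b1 := hβ.le_one
  have c1 := hγ.le_one
  by_cases hij : i = j
  · subst hij
    by_cases hik : i = k
    · subst hik
      left
      simp
      nlinarith
    · by_cases hab : α = β
      · subst hab
        by_cases ha : α = 0
        · left
          subst ha
          simp
          nlinarith
        by_cases hc : γ = 0
        · left
          subst hc
          simp
          nlinarith
        right
        rcases hα.ratio hγ ha hc with h | h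
        · refine ⟨i, k, 2 * α, γ, hik, by simpa using ha, hc, h, 
            ⟨i, i, i, α, α, 0, hα, hα, S4D.zero, ?_⟩, ?_⟩
          · rw [← Pi.single_add]; simp [two_mul]
          · rw [← Pi.single_add]; simp [two_mul]
        · refine ⟨k, i, -γ, - (2 * α), Ne.symm hik, by simpa using hc, by simpa using ha, 
            by simpa using h, ⟨k, k, k, 0, 0, γ, S4D.zero, S4D.zero, hγ, ?_⟩, ?_⟩
          · simp [Pi.single_neg]
          · rw [← Pi.single_add]; simp only [Pi.single_neg, two_mul]; abel
      · left
        have h3 : α + β ≤ 3 / 2 := by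
          rcases hα.eq_or with h | h <;> rcases hβ.eq_or with h' | h'
          · exact absurd (h.trans h'.symm) hab
          all_goals linarith
        simp [hik, Ne.symm hik]
        nlinarith
  · left
    by_cases hik : i = k
    · subst hik
      simp [hij, Ne.symm hij]
      nlinarith
    · by_cases hjk : j = k
      · subst hjk
        simp [hij, Ne.symm hij]
        nlinarith
      · simp [hij, Ne.symm hij, hik, Ne.symm hik, hjk, Ne.symm hjk]
        nlinarith

theorem S4hadamardR {n : ℕ} (M : Matrix (Fin n) (Fin n) ℝ) :
    M.det ^ 2 ≤ ∏ q, (M q ⬝ᵥ M q) := by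
  let b := EuclideanSpace.basisFun (Fin n) ℝ
  haveI : Fact (Module.finrank ℝ (EuclideanSpace ℝ (Fin n)) = n) := ⟨by simp⟩
  let o := b.toBasis.orientation
  have h := o.abs_volumeForm_apply_le (fun q => WithLp.toLp 2 (M q))
  rw [o.volumeForm_robust' b] at h
  have e : b.toBasis.det (fun q => WithLp.toLp 2 (M q)) = M.det := by
    rw [Module.Basis.det_apply, ← Matrix.det_transpose]
    congr 1
  rw [e] at h
  have h2 : M.det ^ 2 ≤ (∏ i, ‖(WithLp.toLp 2 (M i) : EuclideanSpace ℝ (Fin n))‖) ^ 2 := by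
    rw [← sq_abs]; gcongr
  refine h2.trans (le_of_eq ?_)
  rw [← Finset.prod_pow]
  refine Finset.prod_congr rfl fun q _ => ?_
  rw [EuclideanSpace.real_norm_sq_eq]
  simp [dotProduct, sq]

theorem S4hadamard {n : ℕ} (M : Matrix (Fin n) (Fin n) ℚ) :
    M.det ^ 2 ≤ ∏ q, (M q ⬝ᵥ M q) := by
  have h := S4hadamardR (M.map (Rat.castHom ℝ))
  rw [← RingHom.mapMatrix_apply, ← RingHom.map_det] at h
  simp only [dotProduct, RingHom.mapMatrix_apply, Matrix.map_apply, Rat.coe_castHom] at h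
  have : ((M.det ^ 2 : ℚ) : ℝ) ≤ ((∏ q, (M q ⬝ᵥ M q) : ℚ) : ℝ) := by
    simp only [dotProduct, Rat.cast_pow, Rat.cast_prod, Rat.cast_sum, Rat.cast_mul]; exact h
  exact_mod_cast this

def S4psi {n : ℕ} (x y : Fin n) (δ : ℚ) (v : Fin n → ℚ) : Fin n → ℚ :=
  v - Pi.single x (v x) + Pi.single y (δ * v x)

theorem S4psi_add {n : ℕ} (x y : Fin n) (δ : ℚ) (v w : Fin n → ℚ) :
    S4psi x y δ (v + w) = S4psi x y δ v + S4psi x y δ w := by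
  simp only [S4psi, Pi.add_apply, mul_add, Pi.single_add]; abel

theorem S4psi_sub {n : ℕ} (x y : Fin n) (δ : ℚ) (v w : Fin n → ℚ) :
    S4psi x y δ (v - w) = S4psi x y δ v - S4psi x y δ w := by
  simp only [S4psi, Pi.sub_apply, mul_sub, Pi.single_sub]; abel

theorem S4psi_single {n : ℕ} (x y : Fin n) (δ : ℚ) (i : Fin n) (α : ℚ) :
    S4psi x y δ (Pi.single i α) = if i = x then Pi.single y (δ * α) else Pi.single i α := by
  split_ifs with h
  · subst h; simp [S4psi]
  · simp [S4psi, Pi.single_eq_of_ne (Ne.symm h)]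

theorem S4psi_single' {n : ℕ} (x y : Fin n) {δ : ℚ} (hδ : S4D δ) (i : Fin n) {α : ℚ}
    (hα : S4D α) : ∃ j β, S4D β ∧ S4psi x y δ (Pi.single i α) = Pi.single j β := by
  rw [S4psi_single]
  split_ifs
  · exact ⟨_, _, hδ.mul hα, rfl⟩
  · exact ⟨_, _, hα, rfl⟩

theorem S4R.psi {n : ℕ} (x y : Fin n) {δ : ℚ} (hδ : S4D δ) {v : Fin n → ℚ} (h : S4R v) :
    S4R (S4psi x y δ v) := by
  obtain ⟨i, j, k, α, β, γ, hα, hβ, hγ, rfl⟩ := h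
  rw [S4psi_sub, S4psi_add]
  obtain ⟨i', α', ha, ea⟩ := S4psi_single' x y hδ i hα
  obtain ⟨j', β', hb, eb⟩ := S4psi_single' x y hδ j hβ
  obtain ⟨k', γ', hc, ec⟩ := S4psi_single' x y hδ k hγ
  exact ⟨i', j', k', α', β', γ', ha, hb, hc, by rw [ea, eb, ec]⟩

theorem S4step {n : ℕ} (M : Matrix (Fin n) (Fin n) ℚ) (p x y : Fin n) (c d : ℚ) (hxy : x ≠ y)
    (hc : c ≠ 0) (hp : M p = Pi.single x c - Pi.single y d) :
    Matrix.det (Matrix.of fun q => if q = p then Pi.single x c else S4psi x y (d / c) (M q)) =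
      M.det := by
  let N : Matrix (Fin n) (Fin n) ℚ := fun q j => M q j + (if q = p then 0 else -(M q x / c)) * M p j
  have h1 : N.det = M.det :=
    Matrix.det_eq_of_forall_row_eq_smul_add_const (fun q => if q = p then 0 else -(M q x / c)) p
      (by simp) (fun _ _ => rfl)
  rw [← h1, ← Matrix.det_updateCol_add_smul_self N hxy.symm (d / c)]
  congr 1
  ext q j
  have hN : ∀ q j, N q j = M q j + (if q = p then 0 else -(M q x / c)) * M p j := fun _ _ => rfl
  rw [Matrix.updateCol_apply]
  simp only [hN, smul_eq_mul, Matrix.of_apply]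
  clear_value N
  by_cases hq : q = p
  · subst hq
    by_cases hj : j = y
    · subst hj
      simp [hp, hxy, hxy.symm, hc]
    · simp [hp, hj]
  · by_cases hj : j = y
    · subst hj
      simp [hp, hxy, hxy.symm, hc, hq, S4psi]
      field_simp
    · by_cases hjx : j = x
      · subst hjx
        simp [hp, hj, hq, S4psi, hc]
      · simp [hp, hj, hq, S4psi, hjx]

open Classical in
theorem S4det {n : ℕ} (s : Fin n) (N : ℕ) : ∀ (M : Matrix (Fin n) (Fin n) ℚ),
    (∀ q, S4R (M q)) → (∃ i α, S4D α ∧ M s = Pi.single i α) →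
    (Finset.univ.filter (fun q => ¬ ∃ i t, M q = Pi.single i t)).card ≤ N → 
    M.det ^ 2 ≤ 4 ^ (n - 1) := by
  induction N using Nat.strong_induction_on with
  | _ N ih =>
  intro M hR hs hN
  by_cases hall : ∀ q, M q ⬝ᵥ M q ≤ 4
  · refine (S4hadamard M).trans ?_
    have hs1 : M s ⬝ᵥ M s ≤ 1 := by
      obtain ⟨i, α, hα, e⟩ := hs
      rw [e]
      have := hα.nonneg
      have := hα.le_one
      simp
      nlinarith
    have nn : ∀ q, 0 ≤ M q ⬝ᵥ M q := fun q => Finset.sum_nonneg fun j _ => mul_self_nonneg _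
    rw [← Finset.mul_prod_erase _ _ (Finset.mem_univ s)]
    have h2 : ∏ q ∈ Finset.univ.erase s, (M q ⬝ᵥ M q) ≤ 4 ^ (n - 1) := by
      refine (Finset.prod_le_prod (fun q _ => nn q) (fun q _ => hall q)).trans ?_
      simp
    have h3 : 0 ≤ ∏ q ∈ Finset.univ.erase s, (M q ⬝ᵥ M q) := Finset.prod_nonneg fun q _ => nn q
    nlinarith [nn s]
  · push Not at hall
    obtain ⟨p, hp4⟩ := hall
    rcases (hR p).dich with h | ⟨x, y, c, d, hxy, hc, hd, hδ, hRx, hp⟩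
    · exact absurd h (not_le.2 hp4)
    have hpn : ¬ ∃ i t, M p = Pi.single i t := by
      rintro ⟨i, t, e⟩
      rw [hp] at e
      have ex := congrFun e x
      have ey := congrFun e y
      simp [hxy, hxy.symm, Pi.single_apply] at ex ey
      grind
    rw [← S4step M p x y c d hxy hc hp]
    have hsp : s ≠ p := by
      rintro rfl
      obtain ⟨i, α, _, e⟩ := hs
      exact hpn ⟨i, α, e⟩
    set M' : Matrix (Fin n) (Fin n) ℚ :=
      Matrix.of fun q => if q = p then Pi.single x c else S4psi x y (d / c) (M q) with hM'
    have hM'p : M' p = Pi.single x c := by ext j; simp [hM']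
    have hM'q : ∀ q, q ≠ p → M' q = S4psi x y (d / c) (M q) := by
      intro q hq; ext j; simp [hM', hq]
    have hlt : (Finset.univ.filter (fun q => ¬ ∃ i t, M' q = Pi.single i t)).card <
        (Finset.univ.filter (fun q => ¬ ∃ i t, M q = Pi.single i t)).card := by
      apply Finset.card_lt_card
      rw [Finset.ssubset_iff_of_subset]
      · refine ⟨p, by simpa using hpn, ?_⟩
        simp only [Finset.mem_filter, Finset.mem_univ, true_and, not_not]
        exact ⟨x, c, hM'p⟩
      · intro q hq
        simp only [Finset.mem_filter, Finset.mem_univ, true_and] at hq ⊢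
        rintro ⟨i, t, e⟩
        apply hq
        by_cases h : q = p
        · subst h; exact ⟨x, c, hM'p⟩
        · rw [hM'q q h, e, S4psi_single]
          split_ifs
          · exact ⟨_, _, rfl⟩
          · exact ⟨_, _, rfl⟩
    refine ih _ (lt_of_lt_of_le hlt hN) M' ?_ ?_ le_rfl
    · intro q
      by_cases h : q = p
      · subst h; rw [hM'p]; exact hRx
      · rw [hM'q q h]; exact (hR q).psi x y hδ
    · obtain ⟨i, α, hα, e⟩ := hs
      rw [hM'q s hsp, e]
      exact S4psi_single' x y hδ i hα

/-- integer rows of the right type -/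
def S4T {n : ℕ} (v : Fin n → ℚ) : Prop := S4R v ∧ ∃ w : Fin n → ℤ, v = fun j => (w j : ℚ)

theorem S4main {n : ℕ} (A : Set (Fin n → ℚ)) (hA : ∀ v ∈ A, S4T v) (l : Fin n)
    (hl : (Pi.single l 1 : Fin n → ℚ) ∉ Submodule.span ℚ A) :
    ∃ x : Fin n → ℚ, (∀ v ∈ A, v ⬝ᵥ x = 0) ∧ x l = 1 ∧ ∀ i, |x i| ≤ 2 ^ (n - 1) := by
  obtain ⟨b, hbA, hspan, hli⟩ := exists_linearIndependent ℚ A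
  have hli' : LinearIndepOn ℚ id b := hli
  have hins := hli'.id_insert (x := (Pi.single l 1 : Fin n → ℚ)) (by rwa [hspan])
  obtain ⟨B, hBt, hbB, hB, hBli⟩ := exists_linearIndepOn_id_extension hins
    (Set.subset_union_left (t := Set.range fun i => (Pi.single i 1 : Fin n → ℚ)))
  have hsingle : ∀ i : Fin n, S4T (Pi.single i 1 : Fin n → ℚ) := by
    intro i
    refine ⟨⟨i, i, i, 1, 0, 0, S4D.one, S4D.zero, S4D.zero, by simp⟩, Pi.single i 1, ?_⟩
    ext j; simp [Pi.single_apply]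
  have hBT : ∀ v ∈ B, S4T v := by
    intro v hv
    rcases hBt hv with (rfl | h) | ⟨i, rfl⟩
    · exact hsingle l
    · exact hA v (hbA h)
    · exact hsingle i
  have htop : ⊤ ≤ Submodule.span ℚ (Set.range (Subtype.val : B → Fin n → ℚ)) := by
    rw [Subtype.range_coe, ← (Pi.basisFun ℚ (Fin n)).span_eq, Submodule.span_le]
    rintro _ ⟨i, rfl⟩
    apply hB
    right
    exact ⟨i, by simp⟩
  let bas0 : Module.Basis B ℚ (Fin n → ℚ) := Module.Basis.mk hBli htop
  haveI : Fintype B := FiniteDimensional.fintypeBasisIndex bas0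
  have hcard : Fintype.card B = n := by
    rw [← Module.finrank_eq_card_basis bas0]; simp
  let e : B ≃ Fin n := Fintype.equivFinOfCardEq hcard
  let bas := bas0.reindex e
  have hbas : ∀ q, bas q = (e.symm q : Fin n → ℚ) := by intro q; simp [bas, bas0]
  let lB : B := ⟨Pi.single l 1, hbB (Set.mem_insert _ _)⟩
  let s := e lB
  have hs : bas s = Pi.single l 1 := by simp [hbas, s, lB]
  let f := bas.coord s
  let M : Matrix (Fin n) (Fin n) ℚ := Matrix.of fun q => bas q
  have hfA : ∀ v ∈ A, f v = 0 := by
    intro v hv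
    have hv' : v ∈ Submodule.span ℚ b := by rw [hspan]; exact Submodule.subset_span hv
    have : Submodule.span ℚ b ≤ LinearMap.ker f := by
      rw [Submodule.span_le]
      intro w hw
      have hwB : w ∈ B := hbB (Set.mem_insert_of_mem _ hw)
      have hw2 : bas (e ⟨w, hwB⟩) = w := by simp [hbas]
      have hne : e ⟨w, hwB⟩ ≠ s := by
        intro h
        apply hl
        have : w = Pi.single l 1 := by rw [← hw2, h, hs]
        rw [← this, ← hspan]; exact Submodule.subset_span hw
      simp only [SetLike.mem_coe, LinearMap.mem_ker]
      rw [← hw2]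
      simp [f, Finsupp.single_apply, hne]
    exact this hv'
  have hfv : ∀ v : Fin n → ℚ, v ⬝ᵥ (fun i => f (Pi.single i 1)) = f v := by
    intro v
    conv_rhs => rw [pi_eq_sum_univ' v, map_sum]
    simp only [dotProduct, map_smul, smul_eq_mul]
  have hdet0 : M.det ≠ 0 := by
    have : LinearIndependent ℚ M.row := bas.linearIndependent
    rw [Matrix.linearIndependent_rows_iff_isUnit, Matrix.isUnit_iff_isUnit_det] at this
    exact this.ne_zero
  have hMT : ∀ q, S4T (M q) := fun q => by
    have : M q = (e.symm q : Fin n → ℚ) := hbas q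
    rw [this]; exact hBT _ (e.symm q).2
  have hdet1 : 1 ≤ |M.det| := by
    choose w hw using fun q => (hMT q).2
    have : M = (Matrix.of w).map (Int.castRingHom ℚ) := by
      ext q j; rw [hw q]; simp
    rw [← RingHom.mapMatrix_apply] at this
    rw [this, ← RingHom.map_det] at hdet0 ⊢
    simp only [eq_intCast] at hdet0 ⊢
    have h0 : (Matrix.of w).det ≠ 0 := by exact_mod_cast hdet0
    exact_mod_cast Int.one_le_abs h0
  refine ⟨fun i => f (Pi.single i 1), fun v hv => by rw [hfv, hfA v hv], ?_, ?_⟩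
  · show f (Pi.single l 1) = 1
    rw [← hs]; simp [f]
  · intro i
    have h1 := Matrix.det_updateRow_sum M s (fun q => bas.repr (Pi.single i 1) q)
    have h2 : ∑ k, bas.repr (Pi.single i 1) k • M k = Pi.single i 1 := bas.sum_repr _
    rw [h2] at h1
    have h3 := S4det s _ (M.updateRow s (Pi.single i 1)) (by
      intro q
      by_cases h : q = s
      · subst h; rw [Matrix.updateRow_self]; exact (hsingle i).1
      · rw [Matrix.updateRow_ne h]; exact (hMT q).1) ⟨i, 1, S4D.one, by rw [Matrix.updateRow_self]⟩ le_rfl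
    rw [h1] at h3
    have h4 : |f (Pi.single i 1) * M.det| ≤ 2 ^ (n - 1) := by
      refine abs_le_of_sq_le_sq ?_ (by positivity)
      rw [← pow_mul, mul_comm (n - 1) 2, pow_mul]
      norm_num
      exact h3
    rw [abs_mul] at h4
    nlinarith [abs_nonneg (f (Pi.single i 1))]

theorem stmt4 {n : ℕ} (hn : 2 ≤ n) {ι : Type} [Fintype ι]
    (E : ι → (Fin n × Fin n × Fin n) ⊕ (Fin n))
    (hsol : ∃ x : Fin n → ℝ, ∀ e : ι,
      Sum.elim (fun p => x p.1 + x p.2.1 = x p.2.2) (fun l => x l = 1) (E e)) :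
    ∃ x : Fin n → ℚ,
      (∀ e : ι,
        Sum.elim (fun p => x p.1 + x p.2.1 = x p.2.2) (fun l => x l = 1) (E e)) ∧
      ∀ i, |x i| ≤ 2 ^ (n - 1) := by
  obtain ⟨z, hz⟩ := hsol
  by_cases hL : ∃ e l, E e = Sum.inr l
  · obtain ⟨e0, l, hl⟩ := hL
    have hzl : z l = 1 := by have := hz e0; rwa [hl] at this
    let row : (Fin n × Fin n × Fin n) ⊕ (Fin n) → Fin n → ℚ :=
      Sum.elim (fun p => Pi.single p.1 1 + Pi.single p.2.1 1 - Pi.single p.2.2 1)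
        (fun k => Pi.single k 1 - Pi.single l 1)
    obtain ⟨x, hx, hxl, hb⟩ := S4main (Set.range fun e => row (E e)) (by
      rintro _ ⟨e, rfl⟩
      show S4T (row (E e))
      rcases E e with ⟨i, j, k⟩ | k
      · refine ⟨⟨i, j, k, 1, 1, 1, S4D.one, S4D.one, S4D.one, rfl⟩,
          Pi.single i 1 + Pi.single j 1 - Pi.single k 1, ?_⟩
        ext t; simp [row, Pi.single_apply]
      · refine ⟨⟨k, k, l, 1, 0, 1, S4D.one, S4D.zero, S4D.one, by simp [row]⟩,
          Pi.single k 1 - Pi.single l 1, ?_⟩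
        ext t; simp [row, Pi.single_apply]) l (by
      intro hmem
      let g : (Fin n → ℚ) →ₗ[ℚ] ℝ := Fintype.linearCombination ℚ z
      have hg : ∀ i, g (Pi.single i 1) = z i := by
        intro i; simp [g]
      have hle : Submodule.span ℚ (Set.range fun e => row (E e)) ≤ LinearMap.ker g := by
        rw [Submodule.span_le]
        rintro _ ⟨e, rfl⟩
        have h := hz e
        simp only [SetLike.mem_coe, LinearMap.mem_ker]
        rcases hE : E e with ⟨i, j, k⟩ | k
        · rw [hE] at h
          simp only [Sum.elim_inl] at h
          simp only [row, Sum.elim_inl, map_sub, map_add, hg]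
          linarith
        · rw [hE] at h
          simp only [Sum.elim_inr] at h
          simp only [row, Sum.elim_inr, map_sub, hg]
          linarith
      have := hle hmem
      rw [LinearMap.mem_ker, hg, hzl] at this
      exact one_ne_zero this)
    refine ⟨x, fun e => ?_, hb⟩
    have h := hx _ ⟨e, rfl⟩
    dsimp only at h
    rcases hE : E e with ⟨i, j, k⟩ | k
    · rw [hE] at h
      simp [row, sub_dotProduct, add_dotProduct] at h
      simp only [Sum.elim_inl]
      linarith
    · rw [hE] at h
      simp [row, sub_dotProduct] at h
      simp only [Sum.elim_inr]
      linarith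
  · push Not at hL
    refine ⟨0, fun e => ?_, fun i => by simp⟩
    rcases hE : E e with p | k
    · simp
    · exact absurd hE (hL e k)
end

section
/- Let A ∈ ℤ^{m×n} with ‖A‖∞ = 1 or ‖A‖∞ = 2. Then every elementary vector x of the null space N(A) satisfies ω(x) = 1. -/
theorem stmt7_row {n : ℕ} (a : Fin n → ℤ) (h2 : ∑ j, (a j).natAbs ≤ 2) (x : Fin n → ℝ) (c : ℝ)
    (h0 : ∑ j, (a j : ℝ) * x j = 0) :
    ∑ j, (a j : ℝ) * (if |x j| = c then x j else 0) = 0 := by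
  by_cases hA : ∀ j, a j ≠ 0 → |x j| = c
  · rw [← h0]
    refine Finset.sum_congr rfl fun j _ => ?_
    by_cases hj : a j = 0
    · simp [hj]
    · rw [if_pos (hA j hj)]
  by_cases hB : ∀ j, a j ≠ 0 → |x j| ≠ c
  · refine Finset.sum_eq_zero fun j _ => ?_
    by_cases hj : a j = 0
    · simp [hj]
    · rw [if_neg (hB j hj), mul_zero]
  exfalso
  push Not at hA hB
  obtain ⟨k, hk, hkc⟩ := hA
  obtain ⟨j, hj, hjc⟩ := hB
  have hjk : j ≠ k := by rintro rfl; exact hkc hjc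
  have hsub : ∀ s : Finset (Fin n), ∑ i ∈ s, (a i).natAbs ≤ 2 := fun s =>
    (Finset.sum_le_sum_of_subset (Finset.subset_univ s)).trans h2
  have hp := hsub {j, k}
  rw [Finset.sum_pair hjk] at hp
  have hz : ∀ i, i ≠ j → i ≠ k → a i = 0 := by
    intro i hij hik
    have h3 := hsub {i, j, k}
    rw [Finset.sum_insert (by simp [hij, hik]), Finset.sum_pair hjk] at h3
    omega
  have hs : ∑ i, (a i : ℝ) * x i = a j * x j + a k * x k := by
    rw [← Finset.sum_pair (f := fun i => (a i : ℝ) * x i) hjk]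
    symm
    apply Finset.sum_subset (Finset.subset_univ _)
    intro i _ hi
    simp only [Finset.mem_insert, Finset.mem_singleton, not_or] at hi
    simp [hz i hi.1 hi.2]
  rw [hs] at h0
  have e1 : a j = 1 ∨ a j = -1 := by omega
  have e2 : a k = 1 ∨ a k = -1 := by omega
  apply hkc
  rw [← hjc, abs_eq_abs]
  rcases e1 with e1 | e1 <;> rcases e2 with e2 | e2 <;> rw [e1, e2] at h0 <;> push_cast at h0
  · right; linarith
  · left; linarith
  · left; linarith
  · right; linarith

theorem stmt7 {m n : ℕ} (A : Matrix (Fin m) (Fin n) ℤ)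
    (hnorm : normInf A = 1 ∨ normInf A = 2)
    (x : Fin n → ℝ) (hx : x ≠ 0)
    (hker : (A.map (Int.cast : ℤ → ℝ)).mulVec x = 0)
    (helem : ∀ y : Fin n → ℝ, y ≠ 0 → (A.map (Int.cast : ℤ → ℝ)).mulVec y = 0 →
      {i | y i ≠ 0} ⊆ {i | x i ≠ 0} → {i | y i ≠ 0} = {i | x i ≠ 0}) :
    omegaVec x = 1 := by
  obtain ⟨p, hp⟩ := Function.ne_iff.mp hx
  have hp : x p ≠ 0 := hp
  have key := helem (fun j => if |x j| = |x p| then x j else 0)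
    (fun h => hp (by simpa using congrFun h p))
    (by
      funext r
      refine stmt7_row (A r) ?_ x |x p| (congrFun hker r)
      have h1 : ∑ j, (A r j).natAbs ≤ normInf A :=
        Finset.le_sup (f := fun i => ∑ j, (A i j).natAbs) (Finset.mem_univ r)
      omega)
    (by intro i hi hxi; apply hi; simp [hxi])
  have hall : ∀ i, x i ≠ 0 → |x i| = |x p| := by
    intro i hi
    have : i ∈ {i | x i ≠ 0} := hi
    rw [← key] at this
    by_contra hne
    exact this (if_neg hne)
  have hpp : 0 < |x p| := abs_pos.mpr hp
  apply IsGreatest.csSup_eq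
  refine ⟨⟨p, p, hp, (div_self hpp.ne').symm⟩, ?_⟩
  rintro r ⟨i, j, hi, rfl⟩
  rw [hall i hi, div_le_one hpp]
  by_cases hj : x j = 0
  · rw [hj, abs_zero]; exact hpp.le
  · exact (hall j hj).le
end

section
/- Let A ∈ ℤ^{m×n} with rank A ≤ n−1 and ‖A‖∞ ≥ 3, and let x be a nonzero elementary vector of the null space N(A), with support I := supp(x). Then |I| − 1 ≤ rank A and ω(x) ≤ (‖A‖∞ − 1)^{|I|−1}. -/
open Finset in
theorem perm_bound {ι : Type*} [Fintype ι] [DecidableEq ι] (M : Matrix ι ι ℝ) (c d : ι → ι)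
    (a : ι → ι → ℝ) (ha : ∀ r q, 0 ≤ a r q)
    (hM : ∀ r q, |M r q| ≤ a r q + (if q = c r ∨ q = d r then 1 else 0))
    (i0 : ι) (h0 : c i0 = d i0)
    (hli : ∀ t : ι → ℝ, t i0 = 0 → (∀ q, ∑ r, t r * ((Pi.single (c r) 1 : ι → ℝ) q - (Pi.single (d r) 1 : ι → ℝ) q) = 0) → t = 0) :
    |M.det| ≤ ∏ r, (1 + ∑ q, a r q) := by
  classical
  let w : ι → Option ι → ℝ := fun r o => o.elim 1 (a r)
  have hw : ∀ r o, 0 ≤ w r o := by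
    intro r o
    cases o with
    | none => simp [w]
    | some q => exact ha r q
  have hR : ∏ r, (1 + ∑ q, a r q) = ∑ g : ι → Option ι, ∏ r, w r (g r) := by
    rw [← Fintype.prod_sum]
    refine Finset.prod_congr rfl fun r _ => ?_
    rw [Fintype.sum_option]
    rfl
  let P : Finset (Equiv.Perm ι × Finset ι) :=
    univ.filter fun p => ∀ r, r ∉ p.2 → p.1 r = c r ∨ p.1 r = d r
  let G : Equiv.Perm ι × Finset ι → ι → Option ι :=
    fun p r => if r ∈ p.2 then some (p.1 r) else none
  have hG : Set.InjOn G P := by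
    rintro ⟨σ, S⟩ hσ ⟨τ, T⟩ hτ h
    simp only [P, coe_filter, mem_univ, true_and, Set.mem_ofPred_eq] at hσ hτ
    have hST : S = T := by
      ext r
      have := congrFun h r
      simp only [G] at this
      by_cases h1 : r ∈ S <;> by_cases h2 : r ∈ T <;> simp_all
    subst hST
    have hS : ∀ r ∈ S, σ r = τ r := by
      intro r hr
      have := congrFun h r
      simpa [G, hr] using this
    have h00 : σ i0 = τ i0 := by
      by_cases h1 : i0 ∈ S
      · exact hS _ h1
      · have := hσ _ h1
        have := hτ _ h1
        simp_all
    have ht := hli (fun r => if σ r = τ r then 0 else if σ r = c r then 1 else -1)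
      (by simp [h00]) (by
        intro q
        have : ∀ r, (if σ r = τ r then (0:ℝ) else if σ r = c r then 1 else -1) *
            ((Pi.single (c r) 1 : ι → ℝ) q - (Pi.single (d r) 1 : ι → ℝ) q)
            = (Pi.single (σ r) 1 : ι → ℝ) q - (Pi.single (τ r) 1 : ι → ℝ) q := by
          intro r
          by_cases h1 : σ r = τ r
          · simp [h1]
          · have hr : r ∉ S := fun hr => h1 (hS r hr)
            rcases hσ r hr with h2 | h2 <;> rcases hτ r hr with h3 | h3
            · exact absurd (h2.trans h3.symm) h1
            · rw [if_neg h1, if_pos h2, h2, h3, one_mul]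
            · have h4 : σ r ≠ c r := fun h => h1 (h.trans h3.symm)
              rw [if_neg h1, if_neg h4, h2, h3]; ring
            · exact absurd (h2.trans h3.symm) h1
        rw [Finset.sum_congr rfl fun r _ => this r, Finset.sum_sub_distrib,
          Equiv.sum_comp σ (fun r => (Pi.single r 1 : ι → ℝ) q),
          Equiv.sum_comp τ (fun r => (Pi.single r 1 : ι → ℝ) q), sub_self])
    have : σ = τ := by
      ext r
      have := congrFun ht r
      simp only [Pi.zero_apply] at this
      by_contra hne
      rw [if_neg hne] at this
      split_ifs at this <;> norm_num at this
    rw [this]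
  calc |M.det| ≤ ∑ σ : Equiv.Perm ι, ∏ r, |M r (σ r)| := by
        rw [← Matrix.det_transpose, Matrix.det_apply]
        refine (Finset.abs_sum_le_sum_abs _ _).trans (Finset.sum_le_sum fun σ _ => ?_)
        rcases Int.units_eq_one_or (Equiv.Perm.sign σ) with h | h <;>
          simp [h, Finset.abs_prod]
    _ ≤ ∑ σ : Equiv.Perm ι, ∏ r, (a r (σ r) + (if σ r = c r ∨ σ r = d r then 1 else 0)) :=
        Finset.sum_le_sum fun σ _ => Finset.prod_le_prod (fun _ _ => abs_nonneg _)
          fun r _ => hM r (σ r)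
    _ = ∑ σ : Equiv.Perm ι, ∑ S : Finset ι, if (∀ r, r ∉ S → σ r = c r ∨ σ r = d r) then
          ∏ r, w r (G (σ, S) r) else 0 := by
        refine Finset.sum_congr rfl fun σ _ => ?_
        rw [Finset.prod_add, Finset.powerset_univ]
        refine Finset.sum_congr rfl fun S _ => ?_
        have e1 : ∏ r, w r (G (σ, S) r) = ∏ r ∈ S, a r (σ r) := by
          rw [← Finset.prod_subset (Finset.subset_univ S)]
          · exact Finset.prod_congr rfl fun r hr => by simp [G, w, hr]
          · intro r _ hr
            simp [G, w, hr]
        rw [e1]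
        split_ifs with h
        · rw [Finset.prod_eq_one (s := univ \ S), mul_one]
          intro r hr
          rw [if_pos (h r (by simpa using hr))]
        · push Not at h
          obtain ⟨r, hr, h1, h2⟩ := h
          rw [Finset.prod_eq_zero (s := univ \ S) (i := r) (by simpa using hr), mul_zero]
          simp [h1, h2]
    _ = ∑ p ∈ P, ∏ r, w r (G p r) := by
        rw [← Fintype.sum_prod_type', Finset.sum_filter]
    _ = ∑ g ∈ P.image G, ∏ r, w r (g r) := by
        rw [Finset.sum_image hG]
    _ ≤ ∑ g : ι → Option ι, ∏ r, w r (g r) :=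
        Finset.sum_le_sum_of_subset_of_nonneg (Finset.subset_univ _)
          fun g _ _ => Finset.prod_nonneg fun r _ => hw _ _
    _ = _ := hR.symm

theorem key_bound {ι : Type*} [Fintype ι] [DecidableEq ι] (M : Matrix ι ι ℝ) (hdet : M.det ≠ 0)
    (x : ι → ℝ) (hx : ∀ q, x q ≠ 0) (i0 j : ι) (D : ℝ)
    (hrow : M i0 = Pi.single j 1) (hker : ∀ r, r ≠ i0 → ∑ q, M r q * x q = 0)
    (hint : ∀ r q, M r q ≠ 0 → 1 ≤ |M r q|) (hD : ∀ r, r ≠ i0 → ∑ q, |M r q| ≤ D) :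
    |M.det| ≤ (D - 1) ^ (Fintype.card ι - 1) := by
  classical
  have hd : ∀ r, ∃ q, M r q ≠ 0 := by
    intro r
    by_contra! h
    exact hdet (Matrix.det_eq_zero_of_row_eq_zero r h)
  choose d hd using hd
  have hdj : d i0 = j := by
    by_contra h
    apply hd i0
    rw [hrow]; simp [h]
  let v : ι → ι → ι → ℝ := fun r c =>
    if r = i0 then Pi.single c 1 else Pi.single c 1 - Pi.single (d r) 1
  have hN : (Matrix.of fun r q => x q * M r q).det ≠ 0 := by
    rw [Matrix.det_mul_row]
    exact mul_ne_zero (Finset.prod_ne_zero_iff.2 fun q _ => hx q) hdet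
  have hrows : (Matrix.of fun r q => x q * M r q) = fun r => ∑ c, (x c * M r c) • v r c := by
    funext r q
    by_cases h : r = i0
    · simp [v, h, Finset.sum_apply, Pi.single_apply]
    · have := hker r h
      simp only [v, if_neg h, Finset.sum_apply, Pi.smul_apply, Pi.sub_apply, smul_eq_mul, mul_sub,
        Finset.sum_sub_distrib, ← Finset.sum_mul]
      rw [Finset.sum_congr rfl fun c _ => mul_comm (x c) (M r c)] 
      simp only [Finset.sum_congr rfl fun c _ => mul_comm (x c) (M r c), this]
      simp [Pi.single_apply, mul_comm]
  obtain ⟨c, hc⟩ : ∃ c : ι → ι, (Matrix.detRowAlternating (R := ℝ)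
      (fun r => (x (c r) * M r (c r)) • v r (c r))) ≠ 0 := by
    by_contra! h
    apply hN
    rw [hrows]
    change Matrix.detRowAlternating.toMultilinearMap _ = _
    rw [MultilinearMap.map_sum]
    exact Finset.sum_eq_zero fun c _ => h c
  rw [AlternatingMap.map_smul_univ] at hc
  have hc1 : ∀ r, M r (c r) ≠ 0 := fun r h =>
    hc (by rw [Finset.prod_eq_zero (Finset.mem_univ r) (by simp [h]), zero_smul])
  have hc2 : Matrix.det (fun r => v r (c r)) ≠ 0 := fun h => hc (by
    change _ • Matrix.det _ = _
    rw [h, smul_zero])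
  have hcj : c i0 = j := by
    by_contra h
    apply hc1 i0
    rw [hrow]; simp [h]
  have hcd : ∀ r, r ≠ i0 → c r ≠ d r := by
    intro r hr h
    apply hc2
    apply Matrix.det_eq_zero_of_row_eq_zero r
    intro q
    simp [v, hr, h]
  let a : ι → ι → ℝ := fun r q => |M r q| - (if q = c r ∨ q = d r then 1 else 0)
  have hb := perm_bound M c d a (by
      intro r q
      simp only [a]
      split_ifs with h
      · have : M r q ≠ 0 := by
          rcases h with h | h <;> rw [h]
          · exact hc1 r
          · exact hd r
        linarith [hint r q this]
      · simp) (by intro r q; simp [a]) i0 (by rw [hcj, hdj]) (by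
      intro t ht h
      apply Matrix.eq_zero_of_vecMul_eq_zero hc2
      funext q
      refine Eq.trans ?_ (h q)
      simp only [Matrix.vecMul, dotProduct]
      refine Finset.sum_congr rfl fun r _ => ?_
      by_cases hr : r = i0
      · simp [hr, ht]
      · simp [v, hr])
  refine hb.trans ?_
  rw [← Finset.mul_prod_erase _ _ (Finset.mem_univ i0)]
  have hs : ∀ r, ∑ q, a r q = ∑ q, |M r q| - ∑ q, (if q = c r ∨ q = d r then (1:ℝ) else 0) :=
    fun r => Finset.sum_sub_distrib _ _
  have h0 : 1 + ∑ q, a i0 q = 1 := by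
    rw [hs, hrow, hcj, hdj]
    simp [Pi.single_apply, apply_ite abs]
  rw [h0, one_mul, ← Finset.card_univ, ← Finset.card_erase_of_mem (Finset.mem_univ i0),
    ← Finset.prod_const]
  have ha : ∀ r q, 0 ≤ a r q := by
    intro r q
    simp only [a]
    split_ifs with h
    · have : M r q ≠ 0 := by
        rcases h with h | h <;> rw [h]
        · exact hc1 r
        · exact hd r
      linarith [hint r q this]
    · simp
  refine Finset.prod_le_prod (fun r _ => add_nonneg zero_le_one
    (Finset.sum_nonneg fun q _ => ha r q)) fun r hr => ?_
  have hr : r ≠ i0 := Finset.ne_of_mem_erase hr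
  have h2 : ∑ q, (if q = c r ∨ q = d r then (1:ℝ) else 0) = 2 := by
    rw [Finset.sum_ite, Finset.filter_or, Finset.filter_eq', Finset.filter_eq']
    simp [Finset.card_union_of_disjoint, hcd r hr]
  rw [hs, h2]
  linarith [hD r hr]

/-- Selection of rows. -/
theorem exists_rows {m : Type*} {ι : Type*} [Fintype ι] [DecidableEq ι] (B : m → ι → ℝ) (i : ι)
    (x : ι → ℝ) (hxi : x i ≠ 0) (hx : ∀ r, ∑ q, B r q * x q = 0)
    (h : ∀ y : ι → ℝ, (∀ r, ∑ q, B r q * y q = 0) → y i = 0 → y = 0) :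
    ∃ M : Matrix ι ι ℝ, M.det ≠ 0 ∧ M i = Pi.single i 1 ∧ ∀ r, r ≠ i → ∃ k, M r = B k := by
  classical
  let e : ι → ℝ := Pi.single i 1
  have he : e ≠ 0 := by
    intro h; have := congrFun h i; simp [e] at this
  let s : Set (ι → ℝ) := insert e (Set.range B)
  have hspan : Submodule.span ℝ s = ⊤ := by
    by_contra hne
    obtain ⟨f, hf, hle⟩ := Submodule.exists_le_ker_of_lt_top _ (lt_top_iff_ne_top.2 hne)
    have hfv : ∀ v : ι → ℝ, f v = ∑ q, v q * f (Pi.single q 1) := by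
      intro v
      conv_lhs => rw [pi_eq_sum_univ' v]
      simp [map_sum]
    have hy := h (fun q => f (Pi.single q 1)) (by
      intro r
      rw [← hfv]
      exact hle (Submodule.subset_span (Set.mem_insert_of_mem _ ⟨r, rfl⟩))) (by
      exact hle (Submodule.subset_span (Set.mem_insert _ _)))
    apply hf
    ext v
    simp [congrFun hy]
  have hli : LinearIndepOn ℝ id ({e} : Set (ι → ℝ)) := by
    exact LinearIndepOn.singleton (R := ℝ) (v := id) he
  obtain ⟨b, hbs, heb, hsb, hbli⟩ := exists_linearIndepOn_id_extension hli
    (show ({e} : Set _) ⊆ s by simp [s])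
  have hbspan : ⊤ ≤ Submodule.span ℝ (Set.range ((↑) : b → ι → ℝ)) := by
    rw [Subtype.range_coe, ← hspan]
    exact Submodule.span_le.2 hsb
  let bb := Module.Basis.mk (v := ((↑) : b → ι → ℝ)) hbli hbspan
  let eq0 : b ≃ ι := bb.indexEquiv (Pi.basisFun ℝ ι)
  have hem : e ∈ b := heb rfl
  let eq1 : ι ≃ b := (Equiv.swap i (eq0 ⟨e, hem⟩)).trans eq0.symm
  have h1 : eq1 i = ⟨e, hem⟩ := by simp [eq1]
  refine ⟨fun r => (eq1 r : ι → ℝ), ?_, ?_, ?_⟩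
  · have : LinearIndependent ℝ (fun r => (eq1 r : ι → ℝ)) :=
      LinearIndependent.comp hbli eq1 eq1.injective
    have := (Matrix.linearIndependent_rows_iff_isUnit (A := (fun r => (eq1 r : ι → ℝ)))).1 this
    exact ((Matrix.isUnit_iff_isUnit_det _).1 this).ne_zero
  · simp [h1, e]
  · intro r hr
    rcases hbs (eq1 r).2 with h2 | ⟨k, hk⟩
    · exact absurd (eq1.injective (by rw [h1]; exact Subtype.ext h2)) hr
    · exact ⟨k, hk.symm⟩

theorem stmt8 {m n : ℕ} (A : Matrix (Fin m) (Fin n) ℤ)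
    (hrank : (A.map (Int.cast : ℤ → ℝ)).rank ≤ n - 1)
    (hnorm : 3 ≤ normInf A)
    (x : Fin n → ℝ) (hx : x ≠ 0)
    (hker : (A.map (Int.cast : ℤ → ℝ)).mulVec x = 0)
    (helem : ∀ y : Fin n → ℝ, y ≠ 0 → (A.map (Int.cast : ℤ → ℝ)).mulVec y = 0 →
      {i | y i ≠ 0} ⊆ {i | x i ≠ 0} → {i | y i ≠ 0} = {i | x i ≠ 0}) :
    {i | x i ≠ 0}.ncard - 1 ≤ (A.map (Int.cast : ℤ → ℝ)).rank ∧
    omegaVec x ≤ ((normInf A : ℝ) - 1) ^ ({i | x i ≠ 0}.ncard - 1) := by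
  classical
  set I : Set (Fin n) := {i | x i ≠ 0} with hI
  let B : Fin m → I → ℝ := fun r q => (A r q : ℝ)
  have hext : ∀ (r : Fin m) (y : I → ℝ), ∑ q, B r q * y q
      = (A.map (Int.cast : ℤ → ℝ)).mulVec (fun q => if h : q ∈ I then y ⟨q, h⟩ else 0) r := by
    intro r y
    simp only [Matrix.mulVec, dotProduct, Matrix.map_apply]
    rw [← Finset.sum_subset (Finset.subset_univ (Finset.univ.filter (· ∈ I)))
      (by intro q _ hq; simp at hq; simp [hq])]
    rw [Finset.sum_subtype (p := (· ∈ I)) _ (by simp)]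
    refine Finset.sum_congr rfl fun q _ => ?_
    simp [B]
  let x' : I → ℝ := fun q => x q
  have hx' : ∀ q, x' q ≠ 0 := fun q => q.2
  have hBx : ∀ r, ∑ q, B r q * x' q = 0 := by
    intro r
    rw [hext]
    have : (fun q => if h : q ∈ I then x' ⟨q, h⟩ else 0) = x := by
      funext q
      by_cases h : q ∈ I
      · simp [h, x']
      · simp only [h, dite_false]
        simpa [hI, eq_comm] using h
    rw [this, hker]; rfl
  have hBy : ∀ (i : I) (y : I → ℝ), (∀ r, ∑ q, B r q * y q = 0) → y i = 0 → y = 0 := by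
    intro i y hy hyi
    by_contra hne
    obtain ⟨q, hq⟩ := Function.ne_iff.1 hne
    have := helem (fun q => if h : q ∈ I then y ⟨q, h⟩ else 0)
      (by
        intro h
        apply hq
        have := congrFun h q
        simpa using this)
      (by funext r; rw [← hext, hy]; rfl)
      (by
        intro q hq
        by_contra h
        simp only [Set.mem_ofPred_eq] at hq
        exact hq (dif_neg h))
    have h2 := this.ge i.2
    simp [hyi] at h2
  have hcard : I.ncard = Fintype.card I := by
    rw [← Nat.card_coe_set_eq, Nat.card_eq_fintype_card]
  have hBD : ∀ r, ∑ q, |B r q| ≤ (normInf A : ℝ) := by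
    intro r
    have h1 : ∑ q, |B r q| ≤ ∑ q, |(A r q : ℝ)| := by
      rw [← Finset.sum_subtype (p := (· ∈ I)) (Finset.univ.filter (· ∈ I)) (by simp)
        (fun q => |(A r q : ℝ)|)]
      exact Finset.sum_le_sum_of_subset_of_nonneg (Finset.subset_univ _)
        fun _ _ _ => abs_nonneg _
    have h2 : ∑ q, (A r q).natAbs ≤ normInf A :=
      Finset.le_sup (f := fun i => ∑ j, (A i j).natAbs) (Finset.mem_univ r)
    refine h1.trans ?_
    have h3 : ((∑ q, (A r q).natAbs : ℕ) : ℝ) ≤ (normInf A : ℝ) := by exact_mod_cast h2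
    refine le_trans (le_of_eq ?_) h3
    push_cast
    exact Finset.sum_congr rfl fun q _ => by rw [Nat.cast_natAbs, Int.cast_abs]
  obtain ⟨i1, hi1⟩ := Function.ne_iff.1 hx
  have hn3 : (3:ℝ) ≤ normInf A := by exact_mod_cast hnorm
  constructor
  · obtain ⟨M, hM, -, hM2⟩ := exists_rows B ⟨i1, hi1⟩ x' hi1 hBx (hBy _)
    have hli : LinearIndependent ℝ M.row :=
      Matrix.linearIndependent_rows_iff_isUnit.2
        ((Matrix.isUnit_iff_isUnit_det _).2 (isUnit_iff_ne_zero.2 hM))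
    choose k hk using hM2
    let i1' : I := ⟨i1, hi1⟩
    let F : {r : I // r ≠ i1'} → Fin n → ℝ := fun r => (A.map (Int.cast : ℤ → ℝ)).row (k r r.2)
    have hF : LinearIndependent ℝ F := by
      apply LinearIndependent.of_comp (LinearMap.funLeft ℝ ℝ ((↑) : I → Fin n))
      have := hli.comp ((↑) : {r : I // r ≠ i1'} → I) Subtype.val_injective
      convert this using 1
      funext r q
      have := congrFun (hk r r.2) q
      exact this.symm
    have h1 := finrank_span_eq_card hF
    have h2 : Fintype.card {r : I // r ≠ i1'} = Fintype.card I - 1 := by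
      simp [Fintype.card_subtype_compl]
    rw [Matrix.rank_eq_finrank_span_row, hcard, ← h2, ← h1]
    apply Submodule.finrank_mono
    apply Submodule.span_mono
    rintro _ ⟨r, rfl⟩
    exact ⟨_, rfl⟩
  · unfold omegaVec
    refine csSup_le ⟨_, i1, i1, hi1, rfl⟩ ?_
    rintro _ ⟨i, j, hi, rfl⟩
    by_cases hj : x j = 0
    · rw [hj]; simp only [abs_zero, zero_div]
      apply pow_nonneg; linarith
    obtain ⟨M, hM, hM1, hM2⟩ := exists_rows B ⟨i, hi⟩ x' hi hBx (hBy _)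
    let i' : I := ⟨i, hi⟩
    let j' : I := ⟨j, hj⟩
    let N : Matrix I I ℝ := M.updateRow i' (Pi.single j' 1)
    have hMx : M.mulVec x' = x i • Pi.single i' 1 := by
      funext r
      by_cases hr : r = i'
      · subst hr
        simp only [Matrix.mulVec, dotProduct]
        rw [hM1]
        simp [Pi.single_apply, x', i']
      · obtain ⟨k, hk⟩ := hM2 r hr
        simp only [Matrix.mulVec, dotProduct]
        rw [hk, hBx]
        simp [hr]
    have hcr : M.det * x j = x i * N.det := by
      have h1 : M.adjugate.mulVec (M.mulVec x') = M.det • x' := by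
        rw [Matrix.mulVec_mulVec, Matrix.adjugate_mul, Matrix.smul_mulVec, Matrix.one_mulVec]
      rw [hMx, Matrix.mulVec_smul, Matrix.mulVec_single_one] at h1
      have h2 := congrFun h1 j'
      simp only [Pi.smul_apply, smul_eq_mul, Matrix.col_apply, Matrix.adjugate_apply] at h2
      exact h2.symm
    have hN0 : N.det ≠ 0 := by
      intro h
      rw [h, mul_zero] at hcr
      exact mul_ne_zero hM hj hcr
    have hNr : ∀ r, r ≠ i' → ∃ k, N r = B k := by
      intro r hr
      obtain ⟨k, hk⟩ := hM2 r hr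
      exact ⟨k, by rw [← hk]; exact Matrix.updateRow_ne hr⟩
    have hN1 : N i' = Pi.single j' 1 := Matrix.updateRow_self
    have hb := key_bound N hN0 x' hx' i' j' (normInf A) hN1
      (fun r hr => by obtain ⟨k, hk⟩ := hNr r hr; rw [hk]; exact hBx k)
      (fun r q h => by
        by_cases hr : r = i'
        · subst hr
          rw [hN1] at h ⊢
          by_cases hq : q = j'
          · simp [hq]
          · simp [hq] at h
        · obtain ⟨k, hk⟩ := hNr r hr
          rw [hk] at h ⊢
          simp only [B] at h ⊢
          have h' : A k q ≠ 0 := by exact_mod_cast h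
          exact_mod_cast Int.one_le_abs h')
      (fun r hr => by obtain ⟨k, hk⟩ := hNr r hr; rw [hk]; exact hBD k)
    have hMi : ∃ z : ℤ, M.det = z := by
      have : ∀ r q, ∃ z : ℤ, M r q = z := by
        intro r q
        by_cases hr : r = i'
        · subst hr
          rw [hM1]
          by_cases hq : q = i'
          · exact ⟨1, by subst hq; simp [i']⟩
          · exact ⟨0, by simp only [i'] at hq; simp [hq]⟩
        · obtain ⟨k, hk⟩ := hM2 r hr
          exact ⟨A k q, by rw [hk]⟩
      choose Z hZ using this
      refine ⟨Matrix.det (Matrix.of Z), ?_⟩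
      have : M = (Matrix.of Z).map (Int.cast : ℤ → ℝ) := by
        ext r q; simp [hZ]
      rw [this]
      exact (Int.cast_det _).symm
    obtain ⟨z, hz⟩ := hMi
    have hz1 : 1 ≤ |M.det| := by
      rw [hz] at hM ⊢
      have h' : z ≠ 0 := by exact_mod_cast hM
      exact_mod_cast Int.one_le_abs h'
    rw [hcard]
    refine le_trans ?_ hb
    have hi' : x i ≠ 0 := hi
    rw [div_le_iff₀ (abs_pos.2 hi')]
    have h1 : |M.det| * |x j| = |x i| * |N.det| := by rw [← abs_mul, hcr, abs_mul]
    nlinarith [abs_nonneg (x j)]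
end

section
/- Let A ∈ ℤ^{m×n} be a nonzero integer matrix with ‖A‖∞ ≥ 2 whose null space N(A) is nontrivial, and let t > 0 be the least number of nonzero coordinates among nonzero vectors of N(A). Then t − 1 ≤ rank A and ω(A) ≤ (‖A‖∞ − 1)^{t−1} ≤ (‖A‖∞ − 1)^{rank A}. -/
theorem aux1 (N : ℕ) : ∀ (k : ℕ) (M : Matrix (Fin k) (Fin k) ℤ) (b : Fin k → ℕ),
    (∀ r, ∑ c, (M r c).natAbs + b r ≤ N) →
    (∀ R C : Finset (Fin k), R.Nonempty → R.card = C.card →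
      ∃ r ∈ R, b r ≠ 0 ∨ ∃ c, c ∉ C ∧ M r c ≠ 0) →
    M.det.natAbs ≤ (N - 1) ^ k := by
  intro k
  induction k with
  | zero => intro M b _ _; simp
  | succ k ih =>
    intro M b hN hc
    obtain ⟨r0, -, h0⟩ := hc Finset.univ Finset.univ Finset.univ_nonempty rfl
    have hb : b r0 ≠ 0 := by
      rcases h0 with h | ⟨c, h, _⟩
      · exact h
      · simp at h
    have hminor : ∀ p : Fin (k+1),
        (M.submatrix r0.succAbove p.succAbove).det.natAbs ≤ (N - 1) ^ k := by
      intro p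
      apply ih _ (fun r => b (r0.succAbove r) + (M (r0.succAbove r) p).natAbs)
      · intro r
        have := hN (r0.succAbove r)
        rw [Fin.sum_univ_succAbove _ p] at this
        simp only [Matrix.submatrix_apply]
        omega
      · intro R C hR hRC
        obtain ⟨r, hr, h⟩ := hc (R.map r0.succAboveEmb) (C.map p.succAboveEmb)
          (by simpa using hR) (by simpa using hRC)
        obtain ⟨r, hr', rfl⟩ := Finset.mem_map.1 hr
        refine ⟨r, hr', ?_⟩
        simp only [Fin.coe_succAboveEmb] at h ⊢
        rcases h with h | ⟨c, hcC, h⟩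
        · left; omega
        · by_cases hcp : c = p
          · subst hcp; left
            have := Int.natAbs_ne_zero.2 h
            omega
          · obtain ⟨c', rfl⟩ := Fin.exists_succAbove_eq hcp
            right
            refine ⟨c', fun hh => hcC (Finset.mem_map.2 ⟨c', hh, rfl⟩), h⟩
    rw [Matrix.det_succ_row M r0]
    calc _ ≤ ∑ p : Fin (k+1), ((-1) ^ ((r0 : ℕ) + (p : ℕ)) * M r0 p *
            (M.submatrix r0.succAbove p.succAbove).det).natAbs := Int.natAbs_sum_le _ _
      _ ≤ ∑ p, (M r0 p).natAbs * (N - 1) ^ k := by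
          apply Finset.sum_le_sum
          intro p _
          rw [Int.natAbs_mul, Int.natAbs_mul, Int.natAbs_pow]
          simpa using Nat.mul_le_mul_left _ (hminor p)
      _ = (∑ p, (M r0 p).natAbs) * (N - 1) ^ k := by rw [Finset.sum_mul]
      _ ≤ (N - 1) * (N - 1) ^ k := by
          apply Nat.mul_le_mul_right
          have := hN r0
          omega
      _ = (N - 1) ^ (k + 1) := by ring

/-- A nonsingular matrix cannot have a square block carrying a set of rows that kills `y`. -/
theorem aux2 {k : ℕ} (M : Matrix (Fin k) (Fin k) ℝ) (hdet : M.det ≠ 0) (y : Fin k → ℝ)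
    (hy : ∀ c, y c ≠ 0) (R C : Finset (Fin k)) (hR : R.Nonempty) (hRC : R.card = C.card)
    (hsupp : ∀ r ∈ R, ∀ c, c ∉ C → M r c = 0) (hker : ∀ r ∈ R, (M.mulVec y) r = 0) : False := by
  let e : R ≃ C := Finset.equivOfCardEq hRC
  let D : Matrix R R ℝ := fun r s => M r (e s)
  have h1 : ∃ v : R → ℝ, v ≠ 0 ∧ D.mulVec v = 0 := by
    refine ⟨fun s => y (e s), ?_, ?_⟩
    · obtain ⟨r, hr⟩ := hR
      intro h
      exact hy _ (congrFun h ⟨r, hr⟩)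
    · funext r
      have := hker r r.2
      rw [Matrix.mulVec, dotProduct] at this ⊢
      rw [← Finset.sum_subset (Finset.subset_univ C), ← Finset.sum_coe_sort C] at this
      · rw [← Equiv.sum_comp e] at this
        exact this
      · intro c _ hc
        rw [hsupp r r.2 c hc, zero_mul]
  rw [Matrix.exists_mulVec_eq_zero_iff, ← Matrix.exists_vecMul_eq_zero_iff] at h1
  obtain ⟨z, hz0, hz⟩ := h1
  apply hdet
  rw [← Matrix.exists_vecMul_eq_zero_iff]
  refine ⟨fun r => if h : r ∈ R then z ⟨r, h⟩ else 0, ?_, ?_⟩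
  · intro h
    apply hz0
    funext r
    have := congrFun h r
    simpa using this
  · funext c
    simp only [Matrix.vecMul, dotProduct, Pi.zero_apply]
    rw [← Finset.sum_subset (Finset.subset_univ R), ← Finset.sum_coe_sort R]
    · simp only [Finset.coe_mem, dite_true]
      by_cases hc : c ∈ C
      · have := congrFun hz (e.symm ⟨c, hc⟩)
        simpa [Matrix.vecMul, dotProduct, D] using this
      · apply Finset.sum_eq_zero
        intro r _
        rw [hsupp r r.2 c hc, mul_zero]
    · intro r _ hr
      simp [hr]

theorem aux3 {k N : ℕ} (hN1 : 1 ≤ N) (M : Matrix (Fin k) (Fin k) ℤ) (a : Fin k → ℤ) (hdet : M.det ≠ 0)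
    (y : Fin k → ℝ) (hy : ∀ c, y c ≠ 0) (w : ℝ) (hw : w ≠ 0)
    (hker : ∀ r, ∑ c, (M r c : ℝ) * y c + w * a r = 0)
    (hN : ∀ r, ∑ c, (M r c).natAbs + (a r).natAbs ≤ N) (c : Fin k) :
    |y c| ≤ |w| * ((N : ℝ) - 1) ^ k := by
  set M' := M.updateCol c a with hM'
  set MR := M.map (Int.cast : ℤ → ℝ) with hMR
  have hdR : MR.det = (M.det : ℝ) := (Int.cast_det M).symm
  have hdR' : (M'.map (Int.cast : ℤ → ℝ)).det = (M'.det : ℝ) := (Int.cast_det M').symm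
  have hmap : M'.map (Int.cast : ℤ → ℝ) = MR.updateCol c (fun r => (a r : ℝ)) := by
    ext r s
    by_cases h : s = c <;> simp [hM', hMR, h]
  have hMy : MR.mulVec y = (-w) • (fun r => (a r : ℝ)) := by
    funext r
    have := hker r
    simp only [Matrix.mulVec, dotProduct, hMR, Matrix.map_apply, Pi.smul_apply, smul_eq_mul]
    linarith
  have hrel : (M.det : ℝ) * y c = -w * (M'.det : ℝ) := by
    have h1 : MR.cramer (MR.mulVec y) = MR.det • y := by
      rw [Matrix.cramer_eq_adjugate_mulVec, Matrix.mulVec_mulVec, Matrix.adjugate_mul,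
        Matrix.smul_mulVec, Matrix.one_mulVec]
    rw [hMy, map_smul] at h1
    have := congrFun h1 c
    simp only [Pi.smul_apply, smul_eq_mul, Matrix.cramer_apply] at this
    rw [← hmap, hdR, hdR'] at this
    exact this.symm
  have hd' : (M'.det : ℝ) ≠ 0 := by
    intro h
    rw [h, mul_zero] at hrel
    exact mul_ne_zero (by exact_mod_cast hdet) (hy c) hrel
  have hsum : ∀ r, ∀ f : ℤ → ℝ → ℝ, ∑ s, f (M' r s) (Function.update y c w s) + f (M r c) (y c)
      = ∑ s, f (M r s) (y s) + f (a r) w := by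
    intro r f
    rw [← Finset.add_sum_erase _ _ (Finset.mem_univ c),
      ← Finset.add_sum_erase _ (fun s => f (M r s) (y s)) (Finset.mem_univ c)]
    have : ∑ s ∈ Finset.univ.erase c, f (M' r s) (Function.update y c w s)
        = ∑ s ∈ Finset.univ.erase c, f (M r s) (y s) := by
      apply Finset.sum_congr rfl
      intro s hs
      have hs := Finset.ne_of_mem_erase hs
      simp [hM', hs]
    rw [this]
    simp [hM']
    ring
  have hbound : M'.det.natAbs ≤ (N - 1) ^ k := by
    apply aux1 N k M' (fun r => (M r c).natAbs)
    · intro r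
      have h := hsum r (fun u _ => ((u.natAbs : ℕ) : ℝ))
      have h2 : ∑ s, (M' r s).natAbs + (M r c).natAbs = ∑ s, (M r s).natAbs + (a r).natAbs := by
        exact_mod_cast h
      rw [h2]; exact hN r
    · intro R C hR hRC
      by_contra hcon
      push Not at hcon
      apply aux2 (M'.map (Int.cast : ℤ → ℝ)) (by rwa [hdR']) (Function.update y c w) ?_ R C hR hRC
      · intro r hr s hs
        simp [(hcon r hr).2 s hs]
      · intro r hr
        have h := hsum r (fun u v => (u : ℝ) * v)
        have h0 : M r c = 0 := by simpa using (hcon r hr).1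
        have := hker r
        simp only [h0, Int.cast_zero, zero_mul, add_zero] at h
        simp only [Matrix.mulVec, dotProduct, Matrix.map_apply]
        rw [h]; linarith
      · intro s
        by_cases h : s = c
        · subst h; simpa using hw
        · simpa [h] using hy s
  have hb : |(M'.det : ℝ)| ≤ ((N : ℝ) - 1) ^ k := by
    have : ((M'.det.natAbs : ℕ) : ℝ) ≤ (((N - 1) ^ k : ℕ) : ℝ) := by exact_mod_cast hbound
    rw [Nat.cast_natAbs, Int.cast_abs] at this
    rw [Nat.cast_pow, Nat.cast_sub hN1, Nat.cast_one] at this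
    exact this
  have h1 : (1 : ℝ) ≤ |(M.det : ℝ)| := by
    have := Int.one_le_abs hdet
    exact_mod_cast this
  have h2 : |(M.det : ℝ)| * |y c| = |w| * |(M'.det : ℝ)| := by
    rw [← abs_mul, hrel, abs_mul, abs_neg]
  calc |y c| ≤ |(M.det : ℝ)| * |y c| := le_mul_of_one_le_left (abs_nonneg _) h1
    _ = _ := h2
    _ ≤ _ := mul_le_mul_of_nonneg_left hb (abs_nonneg _)

theorem aux4 {m k : ℕ} (B : Matrix (Fin m) (Fin k) ℝ) (hB : ∀ v, B.mulVec v = 0 → v = 0) :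
    ∃ g : Fin k → Fin m, (B.submatrix g id).det ≠ 0 := by
  have hli : LinearIndependent ℝ B.col :=
    Matrix.mulVec_injective_iff.1 ((injective_iff_map_eq_zero B.mulVecLin).2 hB)
  have hr : Module.finrank ℝ (Submodule.span ℝ (Set.range B.row)) = k := by
    rw [← Matrix.rank_eq_finrank_span_row, Matrix.rank_eq_finrank_span_cols,
      finrank_span_eq_card hli, Fintype.card_fin]
  obtain ⟨f, hf, -, hfl⟩ := Submodule.exists_fun_fin_finrank_span_eq ℝ (Set.range B.row)
  choose g hg using hf
  refine ⟨fun i => g (Fin.cast hr.symm i), ?_⟩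
  have h2 : LinearIndependent ℝ (B.submatrix (fun i => g (Fin.cast hr.symm i)) id).row := by
    have : (B.submatrix (fun i => g (Fin.cast hr.symm i)) id).row = f ∘ (Fin.cast hr.symm) := by
      funext i
      exact hg _
    rw [this]
    exact hfl.comp _ (Fin.cast_injective _)
  exact ((Matrix.isUnit_iff_isUnit_det _).1 (Matrix.linearIndependent_rows_iff_isUnit.1 h2)).ne_zero

theorem stmt9 {m n : ℕ} (A : Matrix (Fin m) (Fin n) ℤ) (hA : A ≠ 0)
    (hnorm : 2 ≤ normInf A) (t : ℕ) (ht0 : 0 < t)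
    (ht : IsLeast {c : ℕ | ∃ x : Fin n → ℝ, x ≠ 0 ∧
      (A.map (Int.cast : ℤ → ℝ)).mulVec x = 0 ∧ {i | x i ≠ 0}.ncard = c} t) :
    t - 1 ≤ (A.map (Int.cast : ℤ → ℝ)).rank ∧
    omegaMat (A.map (Int.cast : ℤ → ℝ)) ≤ ((normInf A : ℝ) - 1) ^ (t - 1) ∧
    ((normInf A : ℝ) - 1) ^ (t - 1) ≤
      ((normInf A : ℝ) - 1) ^ (A.map (Int.cast : ℤ → ℝ)).rank := by
  classical
  set AR := A.map (Int.cast : ℤ → ℝ) with hAR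
  obtain ⟨⟨x, hx0, hAx, hxt⟩, hmin⟩ := ht
  set S : Finset (Fin n) := Finset.univ.filter (fun i => x i ≠ 0) with hS
  have hSt : S.card = t := by
    rw [← hxt, ← Set.ncard_coe_finset]
    congr 1
    ext i; simp [hS]
  have hmemS : ∀ i, i ∈ S ↔ x i ≠ 0 := by intro i; simp [hS]
  have hN1 : (1 : ℝ) ≤ (normInf A : ℝ) - 1 := by
    have : (2 : ℝ) ≤ (normInf A : ℝ) := by exact_mod_cast hnorm
    linarith
  have hrow : ∀ i, ∑ j, (A i j).natAbs ≤ normInf A := fun i =>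
    Finset.le_sup (f := fun i => ∑ j, (A i j).natAbs) (Finset.mem_univ i)
  -- key selection
  have key : ∀ i ∈ S, ∃ (e : Fin (t - 1) ≃ (S.erase i : Finset (Fin n))) (g : Fin (t - 1) → Fin m),
      (AR.submatrix g (fun c => (e c : Fin n))).det ≠ 0 := by
    intro i hi
    have hcard : (S.erase i).card = t - 1 := by rw [Finset.card_erase_of_mem hi, hSt]
    let e : Fin (t - 1) ≃ (S.erase i : Finset (Fin n)) := ((S.erase i).equivFinOfCardEq hcard).symm
    refine ⟨e, ?_⟩
    apply aux4 (AR.submatrix id (fun c => (e c : Fin n)))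
    intro v hv
    by_contra hv0
    let z : Fin n → ℝ := fun j => if h : j ∈ S.erase i then v (e.symm ⟨j, h⟩) else 0
    have hze : ∀ c, z (e c) = v c := by
      intro c
      have h := (e c).2
      simp only [z, dif_pos h]
      simp
    have hzs : ∀ j, j ∉ S.erase i → z j = 0 := by
      intro j hj
      simp only [z, dif_neg hj]
    have hz0 : z ≠ 0 := by
      intro h
      apply hv0
      funext c
      rw [← hze, h]; rfl
    have hAz : AR.mulVec z = 0 := by
      funext r
      have := congrFun hv r
      simp only [Matrix.mulVec, dotProduct, Matrix.submatrix_apply, id] at this ⊢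
      rw [← Finset.sum_subset (Finset.subset_univ (S.erase i)),
        ← Finset.sum_coe_sort (S.erase i), ← Equiv.sum_comp e]
      · simpa only [hze] using this
      · intro j _ hj
        rw [hzs j hj, mul_zero]
    have h1 := hmin ⟨z, hz0, hAz, rfl⟩
    have h2 : {j | z j ≠ 0}.ncard ≤ (S.erase i).card := by
      rw [← Set.ncard_coe_finset]
      apply Set.ncard_le_ncard _ (Finset.finite_toSet _)
      intro j hj
      by_contra hj'
      exact hj (hzs j hj')
    omega
  have hbnd : ∀ i j, x i ≠ 0 → |x j| / |x i| ≤ ((normInf A : ℝ) - 1) ^ (t - 1) := by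
    intro i j hi
    have hpos : 0 < |x i| := abs_pos.2 hi
    have h1 : (1 : ℝ) ≤ ((normInf A : ℝ) - 1) ^ (t - 1) := one_le_pow₀ hN1
    rw [div_le_iff₀ hpos, mul_comm]
    by_cases hj : x j = 0
    · rw [hj, abs_zero]; positivity
    by_cases hij : j = i
    · subst hij
      exact le_mul_of_one_le_right hpos.le h1
    have hiS := (hmemS i).2 hi
    obtain ⟨e, g, hdet⟩ := key i hiS
    have hsumS : ∀ f : Fin n → ℝ, (∀ l, l ∉ S → f l = 0) →
        ∑ l, f l = ∑ c, f (e c) + f i := by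
      intro f hf
      rw [← Finset.sum_subset (Finset.subset_univ S) (fun l _ hl => hf l hl),
        ← Finset.sum_erase_add _ _ hiS, ← Finset.sum_coe_sort (S.erase i), ← Equiv.sum_comp e]
    have hjS : j ∈ S.erase i := Finset.mem_erase.2 ⟨hij, (hmemS j).2 hj⟩
    have := aux3 (N := normInf A) (by omega) (A.submatrix g (fun c => (e c : Fin n)))
      (fun r => A (g r) i) ?_ (fun c => x (e c)) ?_ (x i) hi ?_ ?_ (e.symm ⟨j, hjS⟩)
    · simpa using this
    · intro h
      apply hdet
      have h3 := Int.cast_det (R := ℝ) (A.submatrix g (fun c => (e c : Fin n)))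
      rw [h, Int.cast_zero] at h3
      exact h3.symm
    · intro c
      exact (hmemS _).1 (Finset.mem_of_mem_erase (e c).2)
    · intro r
      have h := congrFun hAx (g r)
      simp only [Matrix.mulVec, dotProduct, Pi.zero_apply] at h
      rw [hsumS] at h
      · simp only [hAR, Matrix.map_apply] at h
        simp only [Matrix.submatrix_apply]
        linarith
      · intro l hl
        have : x l = 0 := by simpa [hmemS] using hl
        rw [this, mul_zero]
    · intro r
      refine le_trans ?_ (hrow (g r))
      calc _ = ∑ l ∈ S, (A (g r) l).natAbs := by
            rw [← Finset.sum_erase_add _ _ hiS, ← Finset.sum_coe_sort (S.erase i),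
              ← Equiv.sum_comp e]
            rfl
        _ ≤ _ := Finset.sum_le_sum_of_subset (Finset.subset_univ S)
  have hrank : t - 1 ≤ AR.rank := by
    have hne : S.Nonempty := Finset.card_pos.1 (by omega)
    obtain ⟨i, hi⟩ := hne
    obtain ⟨e, g, hdet⟩ := key i hi
    have h1 := Matrix.rank_of_det_ne_zero hdet
    have h2 := Matrix.rank_submatrix_le AR g (fun c => (e c : Fin n))
    rw [h1, Fintype.card_fin] at h2
    exact h2
  refine ⟨hrank, ?_, pow_le_pow_right₀ hN1 hrank⟩
  have hnn : ∀ y : Fin n → ℝ, 0 ≤ omegaVec y := by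
    intro y
    apply Real.sSup_nonneg
    rintro r ⟨i, j, -, rfl⟩
    positivity
  refine le_trans (csInf_le ⟨0, ?_⟩ ⟨x, hx0, hAx, rfl⟩) ?_
  · rintro r ⟨y, -, -, rfl⟩
    exact hnn y
  · apply Real.sSup_le
    · rintro r ⟨i, j, hi, rfl⟩
      exact hbnd i j hi
    · positivity
end

section
/- Let t ≥ 1 be an integer, k a real number, and ε_1, …, ε_{t−1} ∈ {−1, +1}. Let C_t be the t×t symmetric tridiagonal matrix with (C_t)_{ii} = k² + 1 for 1 ≤ i ≤ t−1, (C_t)_{tt} = k², off-diagonal entries (C_t)_{i,i+1} = (C_t)_{i+1,i} = ε_i·k, and all other entries 0. Then det C_t = k^{2t}. -/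
theorem stmt11 {t : ℕ} (ht : 1 ≤ t) (k : ℝ) (ε : ℕ → ℝ)
    (hε : ∀ i, ε i = 1 ∨ ε i = -1)
    (C : Matrix (Fin t) (Fin t) ℝ)
    (hC : ∀ i j : Fin t, C i j =
      if (i : ℕ) = (j : ℕ) then (if (i : ℕ) = t - 1 then k ^ 2 else k ^ 2 + 1)
      else if (i : ℕ) + 1 = (j : ℕ) then ε (i : ℕ) * k
      else if (j : ℕ) + 1 = (i : ℕ) then ε (j : ℕ) * k
      else 0) :
    C.det = k ^ (2 * t) := by
  let f : ℕ → ℕ → ℝ := fun i l => if l = i then k else if l = i + 1 then ε i else 0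
  let U : Matrix (Fin t) (Fin t) ℝ := Matrix.of fun i l => f i l
  have hsq : ∀ i, ε i * ε i = 1 := by
    intro i
    rcases hε i with h | h <;> rw [h] <;> norm_num
  have hU : C = U * U.transpose := by
    ext i j
    rw [hC, Matrix.mul_apply]
    simp only [U, Matrix.transpose_apply, Matrix.of_apply]
    rw [Fin.sum_univ_eq_sum_range (fun l => f i l * f j l) t]
    have hi := i.2
    have hj := j.2
    generalize (i : ℕ) = a at *
    generalize (j : ℕ) = b at *
    have h1 : ∀ l ∈ Finset.range t, f a l * f b l =
        (if l = a then k * f b a else 0) + (if l = a + 1 then ε a * f b (a + 1) else 0) := by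
      intro l _
      simp only [f]
      by_cases h : l = a
      · subst h; simp
      · by_cases h' : l = a + 1
        · subst h'; simp
        · simp [h, h']
    rw [Finset.sum_congr rfl h1, Finset.sum_add_distrib, Finset.sum_ite_eq', Finset.sum_ite_eq']
    simp only [Finset.mem_range, f]
    have := hsq a
    grind
  have hd : U.det = k ^ t := by
    rw [Matrix.det_of_upperTriangular]
    · simp [U, f]
    · intro i j hij
      have : (j : ℕ) < i := hij
      simp only [U, f, Matrix.of_apply]
      rw [if_neg (by omega), if_neg (by omega)]
  rw [hU, Matrix.det_mul, Matrix.det_transpose, hd]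
  ring
end
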